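/- For n ≥ 4 and S any compact surface, the quotient P_n(S)/Z(P_n(S)) of the pure braid group of S by its center is infinite. -/

import Mathlib

/-!
Let `a` and `b` be loops of configurations in which only one point moves, inside a disc in the
interior of `S`. If the group modulo its center were finite, some power `aᵏ` with `k > 0` would be
central, so `⁅aᵏ, b⁆` would be trivial. A nullhomotopy of a loop of configurations extends to an
isotopy of `S`, first pushing the nullhomotopy into the interior. If only the moving point was
displaced, the isotopy restricts to the complement `F` of the others, where it is a loop of
homeomorphisms based at the identity; such loops trace central elements of `π₁(F)`. Hence
`⁅aᵏ, b⁆` would be central in `π₁(F)`.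

With fixed points at `1`, `-1` and `0`, inversion maps `F` to `ℂ \ {1, -1}`, the whole complement
of the disc going to `0`. The covering of `ℂ \ {1, -1}` by the cosine has the infinite dihedral
group as deck group, and for `a` and `b` with monodromy a generating translation and a reflection
the monodromies of `⁅aᵏ, b⁆` and `b` do not commute.
-/

open MulOpposite Set Topology
open scoped commutatorElement

section CenterQuotient

theorem infinite_quotient_center_of_forall_not_commute {G : Type*} [Group G] {a b : G}
    (h : ∀ k : ℕ, 0 < k → ¬ Commute (a ^ k) b) : Infinite (G ⧸ Subgroup.center G) := by
  by_contra hfin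
  rw [not_infinite_iff_finite] at hfin
  obtain ⟨k, hk, hak⟩ := (isOfFinOrder_of_finite (a : G ⧸ Subgroup.center G)).exists_pow_eq_one
  rw [← QuotientGroup.mk_pow, QuotientGroup.eq_one_iff, Subgroup.mem_center_iff] at hak
  exact h k hk (hak b).symm

theorem infinite_quotient_center_of_ker_le {H P D : Type*} [Group H] [Group P] [Group D]
    (ψ : H →* P) (θ : H →* D) (hker : ∀ g, ψ g = 1 → ∀ h, Commute (θ g) (θ h)) {a b : H}
    (hab : ∀ k : ℕ, 0 < k → ¬ Commute ⁅θ a ^ k, θ b⁆ (θ b)) :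
    Infinite (P ⧸ Subgroup.center P) := by
  refine infinite_quotient_center_of_forall_not_commute (a := ψ a) (b := ψ b) fun k hk hcomm ↦ ?_
  have hψ : ψ ⁅a ^ k, b⁆ = 1 := by
    rwa [map_commutatorElement, map_pow, commutatorElement_eq_one_iff_commute]
  apply hab k hk
  simpa only [map_commutatorElement, map_pow] using hker _ hψ b

theorem dihedralGroup_zero_not_commute {k : ℕ} (hk : 0 < k) :
    ¬ Commute ⁅op (DihedralGroup.r (1 : ZMod 0)) ^ k, op (DihedralGroup.sr (0 : ZMod 0))⁆
      (op (DihedralGroup.sr 0)) := by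
  intro h
  have hrot := congrArg unop h.eq
  simp only [commutatorElement_def, ← op_pow, DihedralGroup.r_one_pow, unop_mul, unop_inv,
    MulOpposite.unop_op, DihedralGroup.inv_r, DihedralGroup.inv_sr, DihedralGroup.r_mul_sr,
    DihedralGroup.sr_mul_r, DihedralGroup.sr_mul_sr, DihedralGroup.sr.injEq] at hrot
  have hzero : ((4 * k : ℕ) : ZMod 0) = 0 := by push_cast; linear_combination hrot
  rw [Nat.cast_eq_zero] at hzero
  lia

end CenterQuotient

section CosineCovering

theorem isQuotientCoveringMap_of_isLocallyInjective {E X G : Type*} [TopologicalSpace E]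
    [TopologicalSpace X] [Group G] [MulAction G E] [ContinuousConstSMul G E]
    {f : E → X} (hf : IsQuotientMap f) (hinj : IsLocallyInjective f)
    (hfree : ∀ (g : G) (x : E), g • x = x → g = 1)
    (hfib : ∀ {x y : E}, f x = f y ↔ x ∈ MulAction.orbit G y) : IsQuotientCoveringMap f G where
  toIsQuotientMap := hf
  toContinuousConstSMul := inferInstance
  apply_eq_iff_mem_orbit := hfib
  disjoint x := by
    obtain ⟨U, hUo, hxU, hU⟩ := hinj x
    refine ⟨U, hUo.mem_nhds hxU, ?_⟩
    rintro g ⟨-, ⟨y, hy, rfl⟩, hgy⟩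
    have hfix : g • y = y := hU hgy hy (hfib.2 ⟨g, rfl⟩)
    exact hfree g y hfix

theorem isOpenQuotientMap_complex_cos : IsOpenQuotientMap Complex.cos where
  surjective := Complex.cos_surjective
  continuous := Complex.continuous_cos
  isOpenMap := by
    have han : AnalyticOnNhd ℂ Complex.cos univ :=
      Complex.differentiable_cos.differentiableOn.analyticOnNhd isOpen_univ
    rcases han.is_constant_or_isOpen isPreconnected_univ with ⟨w, hw⟩ | hopen
    · have h0 := hw 0 trivial
      rw [← hw Real.pi trivial, Complex.cos_zero, Complex.cos_pi] at h0
      norm_num at h0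
    · exact fun s hs ↦ hopen s (subset_univ s) hs

/-- The set `ℂ ∖ {1, -1}` of regular values of the cosine. -/
def cosRegularValues : Set ℂ := {1, -1}ᶜ

theorem cos_mem_cosRegularValues_iff {z : ℂ} :
    Complex.cos z ∈ cosRegularValues ↔ Complex.sin z ≠ 0 := by
  simp [cosRegularValues, Complex.sin_eq_zero_iff_cos_eq]

/-- The set of regular points of the cosine, which covers `ℂ ∖ {1, -1}`. -/
abbrev CosRegular : Type := Complex.cos ⁻¹' cosRegularValues

/-- The cosine as a map onto its regular values. -/
noncomputable def cosCover : CosRegular → cosRegularValues :=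
  cosRegularValues.restrictPreimage Complex.cos

theorem isLocallyInjective_cosCover : IsLocallyInjective cosCover := by
  rw [isLocallyInjective_iff_nhds]
  intro z
  have hderiv := (Complex.hasStrictDerivAt_cos z.1).hasStrictFDerivAt_equiv
    (neg_ne_zero.2 (cos_mem_cosRegularValues_iff.1 z.2))
  obtain ⟨U, hU⟩ : ∃ U ∈ 𝓝 z.1, InjOn Complex.cos U :=
    ⟨_, (hderiv.toOpenPartialHomeomorph _).open_source.mem_nhds
      hderiv.mem_toOpenPartialHomeomorph_source,
      (hderiv.toOpenPartialHomeomorph _).injOn⟩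
  refine ⟨Subtype.val ⁻¹' U, continuousAt_subtype_val.preimage_mem_nhds hU.1, ?_⟩
  exact fun x hx y hy hxy ↦ Subtype.ext (hU.2 hx hy (congrArg Subtype.val hxy))

/-- The infinite dihedral group acts on `ℂ` by the translations by `2π` and the half-turn, which
are the symmetries of the cosine. -/
noncomputable def cosSymmetry : DihedralGroup 0 → ℂ → ℂ
  | .r k, z => z + 2 * Real.pi * ZMod.castHom (dvd_refl 0) ℂ k
  | .sr k, z => -(z + 2 * Real.pi * ZMod.castHom (dvd_refl 0) ℂ k)

theorem cosSymmetry_r_intCast (k : ℤ) (z : ℂ) :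
    cosSymmetry (.r (Int.cast k)) z = z + 2 * Real.pi * k := by
  simp only [cosSymmetry, map_intCast]

theorem cosSymmetry_sr_intCast (k : ℤ) (z : ℂ) :
    cosSymmetry (.sr (Int.cast k)) z = -(z + 2 * Real.pi * k) := by
  simp only [cosSymmetry, map_intCast]

theorem cos_eq_cos_iff_exists_cosSymmetry {w z : ℂ} :
    Complex.cos w = Complex.cos z ↔ ∃ g, cosSymmetry g z = w := by
  rw [Complex.cos_eq_cos_iff]
  constructor
  · rintro ⟨k, rfl | rfl⟩
    · exact ⟨.r (Int.cast (-k)), by rw [cosSymmetry_r_intCast]; push_cast; ring⟩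
    · exact ⟨.sr (Int.cast (-k)), by rw [cosSymmetry_sr_intCast]; push_cast; ring⟩
  · rintro ⟨k | k, rfl⟩ <;> obtain ⟨k, rfl⟩ := ZMod.intCast_surjective k <;> refine ⟨-k, ?_⟩
    · left; rw [cosSymmetry_r_intCast]; push_cast; ring
    · right; rw [cosSymmetry_sr_intCast]; push_cast; ring

noncomputable instance : MulAction (DihedralGroup 0) CosRegular where
  smul g z := ⟨cosSymmetry g z, by
    rw [mem_preimage, cos_eq_cos_iff_exists_cosSymmetry.2 ⟨g, rfl⟩]; exact z.2⟩
  one_smul z := Subtype.ext (by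
    change cosSymmetry (.r 0) z = z
    simp [cosSymmetry])
  mul_smul g h z := Subtype.ext (by
    change cosSymmetry (g * h) z = cosSymmetry g (cosSymmetry h z)
    rcases g with i | i <;> rcases h with j | j <;>
      simp only [DihedralGroup.r_mul_r, DihedralGroup.r_mul_sr, DihedralGroup.sr_mul_r,
        DihedralGroup.sr_mul_sr, cosSymmetry, map_add, map_sub] <;> ring)

theorem coe_dihedral_smul (g : DihedralGroup 0) (z : CosRegular) :
    ((g • z : CosRegular) : ℂ) = cosSymmetry g z := rfl

instance : ContinuousConstSMul (DihedralGroup 0) CosRegular where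
  continuous_const_smul g := by
    refine Continuous.subtype_mk ?_ _
    rcases g with k | k <;> simp only [cosSymmetry] <;> fun_prop

theorem dihedral_eq_one_of_smul_eq (g : DihedralGroup 0) (z : CosRegular) (hgz : g • z = z) :
    g = 1 := by
  rw [Subtype.ext_iff, coe_dihedral_smul] at hgz
  rcases g with k | k <;> obtain ⟨k, rfl⟩ := ZMod.intCast_surjective k
  · have hk : k = 0 := by simpa [cosSymmetry_r_intCast, Real.pi_ne_zero] using hgz
    rw [hk, Int.cast_zero, DihedralGroup.one_def]
  · rw [cosSymmetry_sr_intCast] at hgz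
    have hsin : Complex.sin z = 0 := by
      rw [Complex.sin_eq_zero_iff]
      exact ⟨-k, by push_cast; linear_combination (-1 / 2) * hgz⟩
    exact absurd hsin (cos_mem_cosRegularValues_iff.1 z.2)

theorem isQuotientCoveringMap_cosCover : IsQuotientCoveringMap cosCover (DihedralGroup 0) :=
  isQuotientCoveringMap_of_isLocallyInjective
    (isOpenQuotientMap_complex_cos.restrictPreimage _).isQuotientMap isLocallyInjective_cosCover
    dihedral_eq_one_of_smul_eq (by
      intro x y
      rw [← Subtype.coe_injective.eq_iff]
      exact cos_eq_cos_iff_exists_cosSymmetry.trans (exists_congr fun g ↦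
        Subtype.coe_injective.eq_iff (a := g • y)))

theorem fundamentalGroupToMulOpposite_mk_map {E X G : Type*} [TopologicalSpace E]
    [TopologicalSpace X] [Group G] [MulAction G E] {f : E → X} (hf : IsQuotientCoveringMap f G)
    {e : E} {x : X} (he : f e = x) {g : G} (l : Path e (g • e)) (γ : Path x x)
    (hγ : ∀ t, γ t = f (l t)) :
    hf.fundamentalGroupToMulOpposite ⟨e, he⟩ (Path.Homotopic.Quotient.mk γ) = op g := by
  subst he
  rw [IsQuotientCoveringMap.fundamentalGroupToMulOpposite_apply_eq_Iff]
  rw [hf.isCoveringMap.monodromy_eq_of_map_eq (γ := Path.Homotopic.Quotient.mk γ)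
    (ex := ⟨e, rfl⟩) (ey := ⟨g • e, hf.map_smul g⟩) (Path.Homotopic.Quotient.mk l) ?_]
  · rfl
  · exact congrArg Path.Homotopic.Quotient.mk (Path.ext (funext fun t ↦ (hγ t).symm))

end CosineCovering

section DihedralLoops

theorem norm_cos_lt_two {z : ℂ} (hz : |z.im| ≤ 1) : ‖Complex.cos z‖ < 2 := by
  have hnorm : ‖Complex.cos z‖ ≤ (Real.exp (-z.im) + Real.exp z.im) / 2 := by
    rw [Complex.cos, norm_div, Complex.norm_ofNat]
    gcongr
    refine (norm_add_le _ _).trans_eq ?_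
    simp [Complex.norm_exp]
  have hexp : Real.exp (-z.im) + Real.exp z.im ≤ 1 + Real.exp 1 := by
    rcases abs_le.1 hz with ⟨hl, hr⟩
    rcases le_total 0 z.im with h | h
    · exact add_le_add (Real.exp_le_one_iff.2 (by linarith)) (Real.exp_le_exp.2 hr)
    · rw [add_comm]
      exact add_le_add (Real.exp_le_one_iff.2 h) (Real.exp_le_exp.2 (by linarith))
  linarith [Real.exp_one_lt_d9]

theorem im_eq_zero_of_cos_eq_ofReal {z : ℂ} {x : ℝ} (hx : |x| ≤ 1) (h : Complex.cos z = x) :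
    z.im = 0 := by
  rw [← Real.cos_arccos (abs_le.1 hx).1 (abs_le.1 hx).2, Complex.ofReal_cos, eq_comm,
    Complex.cos_eq_cos_iff] at h
  obtain ⟨k, rfl | rfl⟩ := h <;> simp

theorem cos_mem_integerComplement {z : ℂ} (hz : |z.im| ≤ 1) (hz' : z.im ≠ 0) :
    Complex.cos z ∈ Complex.integerComplement := by
  rintro ⟨m, hm⟩
  have hm2 : |(m : ℝ)| < 2 := by
    have := norm_cos_lt_two hz
    rwa [← hm, Complex.norm_intCast] at this
  have hm1 : |(m : ℝ)| ≤ 1 := by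
    rw [← Int.cast_abs] at hm2 ⊢
    exact_mod_cast Int.lt_add_one_iff.1 (by exact_mod_cast hm2)
  exact hz' (im_eq_zero_of_cos_eq_ofReal hm1 (by rw [← hm, Complex.ofReal_intCast]))

theorem cos_mem_integerComplement_of_norm_eq_one {z : ℂ} (hz : ‖z‖ = 1) :
    Complex.cos z ∈ Complex.integerComplement := by
  by_cases him : z.im = 0
  · have hcos : Complex.cos z = Real.cos 1 := by
      have hre : z = z.re := Complex.ext rfl him
      rw [hre, Complex.norm_real, Real.norm_eq_abs] at hz
      rw [hre, ← Complex.ofReal_cos, ← Real.cos_abs, hz]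
    rintro ⟨m, hm⟩
    rw [hcos, ← Complex.ofReal_intCast, Complex.ofReal_inj] at hm
    have hpos : (0 : ℝ) < m := hm ▸ Real.cos_one_pos
    have hlt : (m : ℝ) < 1 := by
      simpa only [hm, Real.cos_zero] using
        Real.cos_lt_cos_of_nonneg_of_le_pi_div_two le_rfl Real.one_le_pi_div_two one_pos
    norm_cast at hpos hlt
    lia
  · exact cos_mem_integerComplement (hz ▸ Complex.abs_im_le_norm z) him

theorem integerComplement_subset_cosRegularValues :
    Complex.integerComplement ⊆ cosRegularValues := by
  rintro - hz (rfl | rfl)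
  · exact hz ⟨1, Int.cast_one⟩
  · exact hz ⟨-1, by simp⟩

/-- The inclusion of `ℂ ∖ ℤ` into `ℂ ∖ {1, -1}`. -/
def integerComplementInclusion : C(Complex.integerComplement, cosRegularValues) :=
  ⟨inclusion integerComplement_subset_cosRegularValues, continuous_inclusion _⟩

theorem exists_loop_of_path {y : Complex.integerComplement} {e : CosRegular}
    (he : cosCover e = integerComplementInclusion y) {g : DihedralGroup 0}
    (l : Path (e : ℂ) (cosSymmetry g e)) (hl : ∀ t, Complex.cos (l t) ∈ Complex.integerComplement) :
    ∃ a : FundamentalGroup Complex.integerComplement y,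
      isQuotientCoveringMap_cosCover.fundamentalGroupToMulOpposite ⟨e, he⟩
        (FundamentalGroup.map integerComplementInclusion y a) = op g := by
  have hey : Complex.cos e = y := congrArg Subtype.val he
  have hgey : Complex.cos (cosSymmetry g e) = y :=
    (cos_eq_cos_iff_exists_cosSymmetry.2 ⟨g, rfl⟩).trans hey
  let lift : Path e (g • e) :=
    { toFun t := ⟨l t, integerComplement_subset_cosRegularValues (hl t)⟩
      continuous_toFun := l.continuous.subtype_mk _
      source' := Subtype.ext l.source
      target' := Subtype.ext l.target }
  let loop : Path y y :=
    { toFun t := ⟨Complex.cos (l t), hl t⟩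
      continuous_toFun := (Complex.continuous_cos.comp l.continuous).subtype_mk _
      source' := Subtype.ext ((congrArg Complex.cos l.source).trans hey)
      target' := Subtype.ext ((congrArg Complex.cos l.target).trans hgey) }
  refine ⟨Path.Homotopic.Quotient.mk loop, ?_⟩
  exact fundamentalGroupToMulOpposite_mk_map _ he lift
    (loop.map integerComplementInclusion.continuous) fun _ ↦ rfl

-- The segment from `i` to `i + 2π` and the half-circle from `i` to `-i` map to these two loops.
theorem exists_loops_of_dihedral_monodromy :
    ∃ (y : Complex.integerComplement)
      (θ : FundamentalGroup cosRegularValues (integerComplementInclusion y) →*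
        (DihedralGroup 0)ᵐᵒᵖ)
      (a b : FundamentalGroup Complex.integerComplement y),
      θ (FundamentalGroup.map integerComplementInclusion y a) = op (.r 1) ∧
      θ (FundamentalGroup.map integerComplementInclusion y b) = op (.sr 0) := by
  let segment : Path Complex.I (Complex.I + 2 * Real.pi) :=
    { toFun t := Complex.I + 2 * Real.pi * (t : ℝ)
      continuous_toFun := by fun_prop
      source' := by simp
      target' := by simp }
  let halfCircle : Path Complex.I (-Complex.I) :=
    { toFun t := Complex.exp ((Real.pi / 2 - Real.pi * t : ℝ) * Complex.I)
      continuous_toFun := by fun_prop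
      source' := by simp [Complex.exp_pi_div_two_mul_I]
      target' := by
        have hangle : ((Real.pi / 2 - Real.pi * (1 : unitInterval) : ℝ) : ℂ) * Complex.I =
            -(Real.pi / 2 * Complex.I) := by push_cast [Set.Icc.coe_one]; ring
        rw [hangle, Complex.exp_neg, Complex.exp_pi_div_two_mul_I, Complex.inv_I] }
  have hI := cos_mem_integerComplement_of_norm_eq_one Complex.norm_I
  let e : CosRegular := ⟨Complex.I, integerComplement_subset_cosRegularValues hI⟩
  have hr : Complex.I + 2 * Real.pi = cosSymmetry (.r (Int.cast 1)) e := by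
    rw [cosSymmetry_r_intCast, Int.cast_one, mul_one]
  have hsr : -Complex.I = cosSymmetry (.sr (Int.cast 0)) e := by
    rw [cosSymmetry_sr_intCast, Int.cast_zero, mul_zero, add_zero]
  obtain ⟨a, ha⟩ := exists_loop_of_path (y := ⟨_, hI⟩) (e := e) rfl (segment.cast rfl hr.symm)
    fun t ↦ cos_mem_integerComplement (by simp [segment]) (by simp [segment])
  obtain ⟨b, hb⟩ := exists_loop_of_path (y := ⟨_, hI⟩) (e := e) rfl (halfCircle.cast rfl hsr.symm)
    fun t ↦ cos_mem_integerComplement_of_norm_eq_one (Complex.norm_exp_ofReal_mul_I _)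
  rw [Int.cast_one] at ha
  rw [Int.cast_zero] at hb
  exact ⟨_, _, a, b, ha, hb⟩

end DihedralLoops

section ContinuousFamilies

/-- A family of self-homeomorphisms of `X` that is jointly continuous, as are the inverses. Such
families over an interval are the ambient isotopies of `X`. -/
structure IsContinuousFamily {P X : Type*} [TopologicalSpace P] [TopologicalSpace X]
    (Φ : P → X ≃ₜ X) : Prop where
  continuous_apply : Continuous fun q : P × X ↦ Φ q.1 q.2
  continuous_symm_apply : Continuous fun q : P × X ↦ (Φ q.1).symm q.2

namespace IsContinuousFamily

variable {P Q X : Type*} [TopologicalSpace P] [TopologicalSpace Q] [TopologicalSpace X]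
  {Φ Ψ : P → X ≃ₜ X}

theorem apply (hΦ : IsContinuousFamily Φ) {f : Q → P} {g : Q → X} (hf : Continuous f)
    (hg : Continuous g) : Continuous fun q ↦ Φ (f q) (g q) :=
  hΦ.continuous_apply.comp (hf.prodMk hg)

theorem symm_apply (hΦ : IsContinuousFamily Φ) {f : Q → P} {g : Q → X} (hf : Continuous f)
    (hg : Continuous g) : Continuous fun q ↦ (Φ (f q)).symm (g q) :=
  hΦ.continuous_symm_apply.comp (hf.prodMk hg)

theorem comp (hΦ : IsContinuousFamily Φ) {f : Q → P} (hf : Continuous f) :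
    IsContinuousFamily (Φ ∘ f) where
  continuous_apply := hΦ.apply (hf.comp continuous_fst) continuous_snd
  continuous_symm_apply := hΦ.symm_apply (hf.comp continuous_fst) continuous_snd

theorem inv (hΦ : IsContinuousFamily Φ) : IsContinuousFamily fun p ↦ (Φ p)⁻¹ where
  continuous_apply := hΦ.continuous_symm_apply
  continuous_symm_apply := hΦ.continuous_apply

theorem mul (hΦ : IsContinuousFamily Φ) (hΨ : IsContinuousFamily Ψ) :
    IsContinuousFamily fun p ↦ Φ p * Ψ p where
  continuous_apply := hΦ.apply continuous_fst hΨ.continuous_apply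
  continuous_symm_apply := hΨ.symm_apply continuous_fst hΦ.continuous_symm_apply

end IsContinuousFamily

theorem isContinuousFamily_of_antilipschitzWith {P E : Type*} [TopologicalSpace P]
    [PseudoMetricSpace E] {Φ : P → E ≃ₜ E} {K : NNReal}
    (hΦ : Continuous fun q : P × E ↦ Φ q.1 q.2) (hK : ∀ p, AntilipschitzWith K (Φ p)) :
    IsContinuousFamily Φ where
  continuous_apply := hΦ
  continuous_symm_apply := by
    refine continuous_iff_continuousAt.2 fun ⟨p, y⟩ ↦ tendsto_iff_dist_tendsto_zero.2 ?_
    have hbound : Continuous fun q : P × E ↦ K * dist q.2 (Φ q.1 ((Φ p).symm y)) := by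
      have := hΦ.comp (continuous_fst.prodMk (continuous_const (y := (Φ p).symm y)) :
        Continuous fun q : P × E ↦ (q.1, (Φ p).symm y))
      fun_prop
    have hlim := hbound.tendsto (p, y)
    simp only [Homeomorph.apply_symm_apply, dist_self, mul_zero] at hlim
    refine squeeze_zero (fun _ ↦ dist_nonneg) (fun q ↦ ?_) hlim
    simpa only [Homeomorph.apply_symm_apply] using
      (hK q.1).le_mul_dist ((Φ q.1).symm q.2) ((Φ p).symm y)

/-- The family over `P` of homeomorphisms of `Q × X` that acts on the fibre over `q` by
`Φ (p, q)`. -/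
def fiberwiseHomeomorph {P Q X : Type*} [TopologicalSpace P] [TopologicalSpace Q]
    [TopologicalSpace X] {Φ : P × Q → X ≃ₜ X} (hΦ : IsContinuousFamily Φ) (p : P) :
    Q × X ≃ₜ Q × X where
  toFun y := (y.1, Φ (p, y.1) y.2)
  invFun y := (y.1, (Φ (p, y.1)).symm y.2)
  left_inv y := by simp
  right_inv y := by simp
  continuous_toFun := continuous_fst.prodMk (hΦ.apply (by fun_prop) continuous_snd)
  continuous_invFun := continuous_fst.prodMk (hΦ.symm_apply (by fun_prop) continuous_snd)

theorem isContinuousFamily_fiberwiseHomeomorph {P Q X : Type*} [TopologicalSpace P]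
    [TopologicalSpace Q] [TopologicalSpace X] {Φ : P × Q → X ≃ₜ X} (hΦ : IsContinuousFamily Φ) :
    IsContinuousFamily (fiberwiseHomeomorph hΦ) where
  continuous_apply := (continuous_fst.comp continuous_snd).prodMk
    (hΦ.apply (by fun_prop) (by fun_prop))
  continuous_symm_apply := (continuous_fst.comp continuous_snd).prodMk
    (hΦ.symm_apply (by fun_prop) (by fun_prop))

end ContinuousFamilies

section ExtendByIdentity

variable {P X S : Type*} {J : X → S} {K : Set X}

/-- The extension of the self-map `f` of `X` to `S` along the injection `J : X → S`, by the identity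
outside the range of `J`. -/
noncomputable def extendById (J : X → S) (f : X → X) : S → S :=
  Function.extend J (J ∘ f) id

theorem extendById_apply (hJ : Function.Injective J) (f : X → X) (x : X) :
    extendById J f (J x) = J (f x) :=
  hJ.extend_apply _ _ x

theorem extendById_of_notMem_image (hJ : Function.Injective J) {f : X → X}
    (hf : ∀ x ∉ K, f x = x) {y : S} (hy : y ∉ J '' K) : extendById J f y = y := by
  by_cases hrange : ∃ x, J x = y
  · obtain ⟨x, rfl⟩ := hrange
    rw [extendById_apply hJ, hf x fun hx ↦ hy ⟨x, hx, rfl⟩]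
  · exact Function.extend_apply' _ _ _ hrange

theorem leftInverse_extendById (hJ : Function.Injective J) {f g : X → X}
    (hfg : Function.LeftInverse f g) :
    Function.LeftInverse (extendById J f) (extendById J g) := fun y ↦ by
  by_cases hy : ∃ x, J x = y
  · obtain ⟨x, rfl⟩ := hy
    rw [extendById_apply hJ, extendById_apply hJ, hfg x]
  · simp only [extendById, Function.extend_apply' _ _ _ hy, id_eq]

variable [TopologicalSpace P] [TopologicalSpace X] [TopologicalSpace S]

theorem continuous_extendById [T2Space S] (hJ : IsOpenEmbedding J) (hK : IsCompact K)
    {f : P → X → X} (hf : Continuous fun q : P × X ↦ f q.1 q.2) (hid : ∀ p, ∀ x ∉ K, f p x = x) :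
    Continuous fun q : P × S ↦ extendById J (f q.1) q.2 := by
  refine continuous_iff_continuousAt.2 fun ⟨p, y⟩ ↦ ?_
  by_cases hy : y ∈ range J
  · obtain ⟨x, rfl⟩ := hy
    have hP : IsOpenEmbedding (Prod.map id J : P × X → P × S) := .prodMap .id hJ
    refine (hP.continuousAt_iff (x := (p, x))).1 (Continuous.continuousAt ?_)
    exact (hJ.continuous.comp hf).congr fun q ↦ (extendById_apply hJ.injective _ _).symm
  · have hclosed : IsClosed (J '' K) := (hK.image hJ.continuous).isClosed
    have hnhds : ∀ᶠ q : P × S in 𝓝 (p, y), q.2 ∉ J '' K :=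
      (hclosed.isOpen_compl.preimage continuous_snd).mem_nhds fun h ↦ hy (image_subset_range _ _ h)
    exact continuousAt_snd.congr (hnhds.mono fun q hq ↦
      (extendById_of_notMem_image hJ.injective (hid q.1) hq).symm)

theorem exists_isContinuousFamily_extend [T2Space S] (hJ : IsOpenEmbedding J) (hK : IsCompact K)
    {Φ : P → X ≃ₜ X} (hΦ : IsContinuousFamily Φ) (hid : ∀ p, ∀ x ∉ K, Φ p x = x) :
    ∃ Ψ : P → S ≃ₜ S, IsContinuousFamily Ψ ∧ ∀ p x, Ψ p (J x) = J (Φ p x) := by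
  have hid' : ∀ p, ∀ x ∉ K, (Φ p).symm x = x := fun p x hx ↦ by
    rw [Homeomorph.symm_apply_eq, hid p x hx]
  have hcont := continuous_extendById hJ hK hΦ.continuous_apply hid
  have hcont' := continuous_extendById hJ hK hΦ.continuous_symm_apply hid'
  exact ⟨fun p ↦
    { toFun := extendById J (Φ p)
      invFun := extendById J (Φ p).symm
      left_inv := leftInverse_extendById hJ.injective (Φ p).left_inv
      right_inv := leftInverse_extendById hJ.injective (Φ p).right_inv
      continuous_toFun := hcont.comp (by fun_prop : Continuous fun y ↦ (p, y))
      continuous_invFun := hcont'.comp (by fun_prop : Continuous fun y ↦ (p, y)) },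
    ⟨hcont, hcont'⟩, fun p x ↦ extendById_apply hJ.injective _ _⟩

end ExtendByIdentity

section Push

theorem lipschitzWith_max_zero_sub_norm_sub {E : Type*} [SeminormedAddCommGroup E] (c : E)
    (r : ℝ) : LipschitzWith 1 fun x : E ↦ max 0 (r - ‖x - c‖) := by
  refine LipschitzWith.const_max (LipschitzWith.of_dist_le_mul fun x y ↦ ?_) 0
  rw [NNReal.coe_one, one_mul, dist_sub_left, dist_eq_norm x, ← sub_sub_sub_cancel_right x y c]
  exact abs_norm_sub_norm_le _ _

variable {E : Type*} [NormedAddCommGroup E] [NormedSpace ℝ E]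

/-- The map that moves points of the ball of centre `c` and radius `r` in the direction `v`, moving
`x` the further the closer it is to `c`. -/
def push (c : E) (r : ℝ) (v x : E) : E := x + max 0 (r - ‖x - c‖) • v

theorem continuous_push (c : E) (r : ℝ) : Continuous fun q : E × E ↦ push c r q.1 q.2 := by
  unfold push; fun_prop

theorem push_of_le_norm_sub {c : E} {r : ℝ} (v : E) {x : E} (hx : r ≤ ‖x - c‖) :
    push c r v x = x := by
  rw [push, max_eq_left (sub_nonpos.2 hx), zero_smul, add_zero]

theorem push_of_norm_sub_le {c : E} {r : ℝ} (v : E) {x : E} (hx : ‖x - c‖ ≤ r) :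
    push c r v x = x + (r - ‖x - c‖) • v := by
  rw [push, max_eq_right (sub_nonneg.2 hx)]

theorem norm_push_sub_le {c : E} {r : ℝ} {v x : E} (hv : ‖v‖ ≤ 1) (hx : ‖x - c‖ ≤ r) :
    ‖push c r v x - c‖ ≤ r := by
  rw [push_of_norm_sub_le v hx, add_sub_right_comm]
  calc ‖x - c + (r - ‖x - c‖) • v‖
      ≤ ‖x - c‖ + (r - ‖x - c‖) * ‖v‖ :=
        norm_add_le_of_le le_rfl (norm_smul_of_nonneg (sub_nonneg.2 hx) v).le
    _ ≤ ‖x - c‖ + (r - ‖x - c‖) :=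
        add_le_add_right (mul_le_of_le_one_right (sub_nonneg.2 hx) hv) _
    _ = r := add_sub_cancel _ _

theorem approximatesLinearOn_push (c : E) (r : ℝ) {v : E} (hv : ‖v‖ ≤ 1 / 2) :
    ApproximatesLinearOn (push c r v) (ContinuousLinearEquiv.refl ℝ E : E →L[ℝ] E) univ
      (1 / 2) := by
  refine LipschitzOnWith.approximatesLinearOn (LipschitzWith.lipschitzOnWith ?_)
  refine LipschitzWith.of_dist_le_mul fun x y ↦ ?_
  have hbump := (lipschitzWith_max_zero_sub_norm_sub c r).dist_le_mul x y
  rw [NNReal.coe_one, one_mul] at hbump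
  calc dist ((push c r v - ⇑(ContinuousLinearEquiv.refl ℝ E : E →L[ℝ] E)) x)
        ((push c r v - ⇑(ContinuousLinearEquiv.refl ℝ E : E →L[ℝ] E)) y)
      = dist (max 0 (r - ‖x - c‖)) (max 0 (r - ‖y - c‖)) * ‖v‖ := by
        simp [push, dist_eq_norm, ← sub_smul, norm_smul]
    _ ≤ ((1 / 2 : NNReal) : ℝ) * dist x y := by
        rw [mul_comm, NNReal.coe_div, NNReal.coe_one, NNReal.coe_ofNat]
        gcongr

theorem half_lt_inv_nnnorm_refl_symm :
    Subsingleton E ∨ (1 / 2 : NNReal) <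
      ‖((ContinuousLinearEquiv.refl ℝ E).symm : E →L[ℝ] E)‖₊⁻¹ := by
  refine (subsingleton_or_nontrivial E).imp_right fun (_ : Nontrivial E) ↦ ?_
  rw [ContinuousLinearEquiv.refl_symm, ContinuousLinearEquiv.coe_refl,
    ContinuousLinearMap.nnnorm_id, inv_one]
  exact NNReal.half_lt_self one_ne_zero

theorem injective_push (c : E) (r : ℝ) {v : E} (hv : ‖v‖ ≤ 1 / 2) :
    Function.Injective (push c r v) :=
  injOn_univ.1 ((approximatesLinearOn_push c r hv).injOn half_lt_inv_nnnorm_refl_symm)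

variable [CompleteSpace E]

/-- `push` as a homeomorphism, defined for displacements of norm at most `1 / 2`. -/
noncomputable def pushHomeomorph (c : E) (r : ℝ) (v : Metric.closedBall (0 : E) (1 / 2)) : E ≃ₜ E :=
  (approximatesLinearOn_push c r (mem_closedBall_zero_iff.1 v.2)).toHomeomorph (push c r v)
    half_lt_inv_nnnorm_refl_symm

theorem isContinuousFamily_pushHomeomorph (c : E) (r : ℝ) :
    IsContinuousFamily (pushHomeomorph c r) := by
  refine isContinuousFamily_of_antilipschitzWith ?_ fun v x y ↦
    ((approximatesLinearOn_push c r (mem_closedBall_zero_iff.1 v.2)).antilipschitz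
      half_lt_inv_nnnorm_refl_symm) ⟨x, mem_univ x⟩ ⟨y, mem_univ y⟩
  exact (continuous_push c r).comp (continuous_subtype_val.prodMap continuous_id)

end Push

section ModelLocus

/-- The set of points of `S` with an open neighbourhood homeomorphic to `E`. When `S` is a manifold
with boundary modelled on a half-space of `E`, this is its interior. -/
def modelLocus (E S : Type*) [TopologicalSpace E] [TopologicalSpace S] : Set S :=
  {x | ∃ j : E → S, IsOpenEmbedding j ∧ x ∈ range j}

theorem isOpen_modelLocus {E S : Type*} [TopologicalSpace E] [TopologicalSpace S] :
    IsOpen (modelLocus E S) :=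
  isOpen_iff_mem_nhds.2 fun _ ⟨j, hj, hx⟩ ↦
    Filter.mem_of_superset (hj.isOpen_range.mem_nhds hx) fun _ hy ↦ ⟨j, hj, hy⟩

variable {E S : Type*} [NormedAddCommGroup E] [NormedSpace ℝ E] [TopologicalSpace S]

theorem exists_isOpenEmbedding_of_mem_source (e : OpenPartialHomeomorph S E) {x : S}
    (hx : x ∈ e.source) :
    ∃ j : E → S, IsOpenEmbedding j ∧ j 0 = x ∧ range j ⊆ e.source := by
  obtain ⟨r, hr, hball⟩ := Metric.isOpen_iff.1 e.open_target (e x) (e.map_source hx)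
  let k := (OpenPartialHomeomorph.univBall (e x) r).trans e.symm
  have hk : k.source = univ := by
    refine eq_univ_of_forall fun y ↦ ?_
    have hy : y ∈ (OpenPartialHomeomorph.univBall (e x) r).source := by simp
    have := (OpenPartialHomeomorph.univBall (e x) r).map_source hy
    rw [OpenPartialHomeomorph.univBall_target _ hr] at this
    exact ⟨hy, hball this⟩
  refine ⟨k, k.isOpenEmbedding hk, ?_, ?_⟩
  · simp [k, e.left_inv hx]
  · rintro _ ⟨y, rfl⟩
    exact e.map_target (hk.ge (mem_univ y)).2

theorem mem_modelLocus_iff {x : S} :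
    x ∈ modelLocus E S ↔ ∃ e : OpenPartialHomeomorph S E, x ∈ e.source := by
  refine ⟨fun ⟨j, hj, hx⟩ ↦ ?_, fun ⟨e, hx⟩ ↦ ?_⟩
  · refine ⟨(hj.toOpenPartialHomeomorph j).symm, ?_⟩
    simpa using hx
  · obtain ⟨j, hj, rfl, -⟩ := exists_isOpenEmbedding_of_mem_source e hx
    exact ⟨j, hj, mem_range_self 0⟩

theorem exists_isOpenEmbedding_range_subset {x : S} (hx : x ∈ modelLocus E S) {U : Set S}
    (hU : IsOpen U) (hxU : x ∈ U) :
    ∃ j : E → S, IsOpenEmbedding j ∧ j 0 = x ∧ range j ⊆ U := by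
  obtain ⟨e, he⟩ := mem_modelLocus_iff.1 hx
  obtain ⟨j, hj, hjx, hjr⟩ := exists_isOpenEmbedding_of_mem_source (e.restrOpen U hU) ⟨he, hxU⟩
  exact ⟨j, hj, hjx, hjr.trans inter_subset_right⟩

theorem exists_isOpenEmbedding_prod [T2Space S] {ι : Type*} [TopologicalSpace ι]
    [DiscreteTopology ι] [Finite ι] {c : ι → S} (hc : Function.Injective c)
    (hloc : ∀ i, c i ∈ modelLocus E S) :
    ∃ J : ι × E → S, IsOpenEmbedding J ∧ ∀ i, J (i, 0) = c i := by
  obtain ⟨U, hU, hdisj⟩ := (finite_range c).t2_separation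
  choose j hj hj0 hjU using fun i ↦
    exists_isOpenEmbedding_range_subset (hloc i) (hU (c i)).2 (hU (c i)).1
  refine ⟨fun y ↦ j y.1 y.2, .of_continuous_injective_isOpenMap ?_ ?_ ?_, hj0⟩
  · exact continuous_prod_of_discrete_left.2 fun i ↦ (hj i).continuous
  · rintro ⟨i, x⟩ ⟨i', x'⟩ (h : j i x = j i' x')
    obtain rfl : i = i' := by
      by_contra hne
      exact disjoint_left.1 (hdisj (mem_range_self i) (mem_range_self i') (hc.ne hne))
        (hjU i (mem_range_self x)) (hjU i' ⟨x', h.symm⟩)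
    rw [(hj i).injective h]
  · exact isOpenMap_prod_of_discrete_left.2 fun i ↦ (hj i).isOpenMap

end ModelLocus

section AmbientIsotopy

variable {E S : Type*} [NormedAddCommGroup E] [NormedSpace ℝ E] [FiniteDimensional ℝ E]
  [TopologicalSpace S]

theorem exists_isContinuousFamily_push [T2Space S] {ι : Type*} [TopologicalSpace ι]
    [DiscreteTopology ι] [Finite ι] {J : ι × E → S} (hJ : IsOpenEmbedding J) :
    ∃ Φ : (ι → Metric.closedBall (0 : E) (1 / 2)) → S ≃ₜ S,
      IsContinuousFamily Φ ∧ ∀ v i, Φ v (J (i, 0)) = J (i, v i) := by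
  have : CompleteSpace E := FiniteDimensional.complete ℝ E
  have : ProperSpace E := FiniteDimensional.proper ℝ E
  have heval : Continuous fun p : (ι → Metric.closedBall (0 : E) (1 / 2)) × ι ↦ p.1 p.2 :=
    continuous_prod_of_discrete_right.2 continuous_apply
  have hpush := (isContinuousFamily_pushHomeomorph (0 : E) 1).comp heval
  have hK : IsCompact (univ ×ˢ Metric.closedBall 0 1 : Set (ι × E)) :=
    isCompact_univ.prod (isCompact_closedBall 0 1)
  have hid : ∀ v, ∀ y ∉ (univ ×ˢ Metric.closedBall 0 1 : Set (ι × E)),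
      fiberwiseHomeomorph hpush v y = y := fun v ⟨i, x⟩ hx ↦ by
    simp only [mem_prod, mem_univ, true_and, mem_closedBall_zero_iff, not_le] at hx
    exact Prod.ext rfl (push_of_le_norm_sub _ (by simpa only [sub_zero] using hx.le))
  obtain ⟨Φ, hΦ, hΦJ⟩ := exists_isContinuousFamily_extend hJ hK
    (isContinuousFamily_fiberwiseHomeomorph hpush) hid
  refine ⟨Φ, hΦ, fun v i ↦ (hΦJ v (i, 0)).trans (congrArg (fun x ↦ J (i, x)) ?_)⟩
  change push 0 1 (v i : E) 0 = v i
  simp [push]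

/-- The points `h p i`, for `p ∈ R`, are carried along by an ambient isotopy: they are the images of
fixed points under a continuous family of homeomorphisms. -/
def IsCarriedOn {P ι : Type*} [TopologicalSpace P] (h : P → ι → S) (R : Set P) : Prop :=
  ∃ (Φ : P → S ≃ₜ S) (c : ι → S), IsContinuousFamily Φ ∧ ∀ p ∈ R, ∀ i, Φ p (c i) = h p i

theorem exists_nhds_isCarriedOn [T2Space S] {P ι : Type*} [TopologicalSpace P] [T4Space P]
    [Finite ι] {h : P → ι → S} (hh : Continuous h) {p₀ : P} (hinj : Function.Injective (h p₀))
    (hloc : ∀ i, h p₀ i ∈ modelLocus E S) : ∃ V ∈ 𝓝 p₀, IsCarriedOn h V := by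
  let _ : TopologicalSpace ι := ⊥
  have : DiscreteTopology ι := ⟨rfl⟩
  obtain ⟨J, hJ, hJ₀⟩ := exists_isOpenEmbedding_prod hinj hloc
  obtain ⟨Φ, hΦ, hΦJ⟩ := exists_isContinuousFamily_push hJ
  have hcont (i) : Continuous fun p ↦ h p i := (continuous_apply i).comp hh
  have hnear : ∀ᶠ p in 𝓝 p₀, ∀ i, h p i ∈ J '' ({i} ×ˢ Metric.closedBall 0 (1 / 2)) :=
    Filter.eventually_all.2 fun i ↦ (hcont i).continuousAt.eventually_mem <| by
      rw [← hJ₀ i]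
      refine hJ.isOpenMap.image_mem_nhds (prod_mem_nhds (by simp) ?_)
      exact Metric.closedBall_mem_nhds 0 one_half_pos
  obtain ⟨V, ⟨hV, hVclosed⟩, hVnear⟩ := (closed_nhds_basis p₀).mem_iff.1 hnear
  have hcoord : ∀ p : V, ∀ i, ∃ x : Metric.closedBall (0 : E) (1 / 2), J (i, x) = h p i := by
    intro p i
    obtain ⟨⟨_, x⟩, ⟨rfl, hx⟩, hxh⟩ := hVnear p.2 i
    exact ⟨⟨x, hx⟩, hxh⟩
  choose v hv using hcoord
  have hvcont : Continuous v := continuous_pi fun i ↦ continuous_induced_rng.2 <| by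
    have hJv : Continuous fun p : V ↦ (i, (v p i : E)) := hJ.isInducing.continuous_iff.2 <|
      ((hcont i).comp continuous_subtype_val).congr fun p ↦ (hv p i).symm
    exact continuous_snd.comp hJv
  have : TietzeExtension (Metric.closedBall (0 : E) (1 / 2)) :=
    Metric.instTietzeExtensionClosedBall ℝ 0 one_half_pos
  obtain ⟨w, hw⟩ := ContinuousMap.exists_restrict_eq hVclosed ⟨v, hvcont⟩
  refine ⟨V, hV, Φ ∘ w, h p₀, hΦ.comp w.continuous, fun p hp i ↦ ?_⟩
  have hwv : w p = v ⟨p, hp⟩ := DFunLike.congr_fun hw ⟨p, hp⟩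
  rw [← hJ₀, Function.comp_apply, hΦJ, hwv, hv]

variable {P X ι : Type*} [TopologicalSpace P] [TopologicalSpace X]

theorem IsCarriedOn.mono {h : P → ι → S} {R R' : Set P} (hR : IsCarriedOn h R) (hsub : R' ⊆ R) :
    IsCarriedOn h R' :=
  let ⟨Φ, c, hΦ, hc⟩ := hR
  ⟨Φ, c, hΦ, fun p hp ↦ hc p (hsub hp)⟩

theorem IsCarriedOn.comp {h : P → ι → S} {R : Set P} (hR : IsCarriedOn h R) {f : X → P}
    (hf : Continuous f) : IsCarriedOn (h ∘ f) (f ⁻¹' R) :=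
  let ⟨Φ, c, hΦ, hc⟩ := hR
  ⟨Φ ∘ f, c, hΦ.comp hf, fun x hx ↦ hc (f x) hx⟩

theorem IsCarriedOn.union_Icc {T : Type*} [TopologicalSpace T] [LinearOrder T]
    [OrderTopology T] {h : X × T → ι → S} {U : Set X} {a b c : T}
    (hab : IsCarriedOn h (U ×ˢ Icc a b)) (hbc : IsCarriedOn h (U ×ˢ Icc b c))
    (hle : a ≤ b) (hle' : b ≤ c) :
    IsCarriedOn h (U ×ˢ Icc a c) := by
  obtain ⟨Φ, x, hΦ, hx⟩ := hab
  obtain ⟨Ψ, y, hΨ, hy⟩ := hbc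
  refine ⟨fun p ↦ Ψ (p.1, max b p.2) * (Ψ (p.1, b))⁻¹ * Φ (p.1, min p.2 b), x, ?_, ?_⟩
  · exact ((hΨ.comp (by fun_prop)).mul (hΨ.comp (by fun_prop)).inv).mul (hΦ.comp (by fun_prop))
  · rintro ⟨u, t⟩ ⟨hu, hat, htc⟩ i
    rcases le_total t b with htb | hbt
    · simp [htb, hx (u, t) ⟨hu, hat, htb⟩]
    · have hjoin : Φ (u, b) (x i) = Ψ (u, b) (y i) := by
        rw [hx (u, b) ⟨hu, hle, le_rfl⟩, hy (u, b) ⟨hu, le_rfl, hle'⟩]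
      simp [hbt, hjoin, hy (u, t) ⟨hu, hbt, htc⟩]

theorem exists_isCarriedOn_prod_univ {l : Filter X} {h : X × unitInterval → ι → S}
    (hloc : ∀ t, ∃ U ∈ l, ∃ V ∈ 𝓝 t, IsCarriedOn h (U ×ˢ V)) :
    ∃ U ∈ l, IsCarriedOn h (U ×ˢ univ) := by
  choose U hU V hV hUV using hloc
  obtain ⟨t, ht₀, htmono, ⟨N, hN⟩, ht⟩ := exists_monotone_Icc_subset_open_cover_unitInterval
    (fun s ↦ isOpen_interior (s := V s))
    fun s _ ↦ mem_iUnion.2 ⟨s, mem_interior_iff_mem_nhds.2 (hV s)⟩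
  have hind : ∀ n, ∃ W ∈ l, IsCarriedOn h (W ×ˢ Icc 0 (t n)) := by
    intro n
    induction n with
    | zero =>
      refine ⟨U 0, hU 0, (hUV 0).mono (prod_mono_right ?_)⟩
      rw [ht₀, Icc_self, singleton_subset_iff]
      exact mem_of_mem_nhds (hV 0)
    | succ n ih =>
      obtain ⟨W, hW, hWcarried⟩ := ih
      obtain ⟨s, hs⟩ := ht n
      refine ⟨W ∩ U s, Filter.inter_mem hW (hU s), ?_⟩
      exact (hWcarried.mono (prod_mono_left inter_subset_left)).union_Icc
        ((hUV s).mono (prod_mono inter_subset_right (hs.trans interior_subset)))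
        unitInterval.nonneg' (htmono n.le_succ)
  obtain ⟨W, hW, hWcarried⟩ := hind N
  refine ⟨W, hW, hWcarried.mono (prod_mono_right fun s _ ↦ ⟨unitInterval.nonneg', ?_⟩)⟩
  rw [hN N le_rfl]
  exact unitInterval.le_one'

theorem isCarriedOn_univ [T2Space S] [Finite ι] {h : unitInterval × unitInterval → ι → S}
    (hh : Continuous h) (hinj : ∀ p, Function.Injective (h p))
    (hloc : ∀ p i, h p i ∈ modelLocus E S) : IsCarriedOn h univ := by
  have hstrip : ∀ s, ∃ U ∈ 𝓝 s, IsCarriedOn h (U ×ˢ univ) := fun s ↦ by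
    refine exists_isCarriedOn_prod_univ fun t ↦ ?_
    obtain ⟨W, hW, hcarried⟩ := exists_nhds_isCarriedOn hh (hinj (s, t)) (hloc (s, t))
    obtain ⟨U, hU, V, hV, hUV⟩ := mem_nhds_prod_iff.1 hW
    exact ⟨U, hU, V, hV, hcarried.mono hUV⟩
  obtain ⟨U, hU, hcarried⟩ := exists_isCarriedOn_prod_univ (l := ⊤) (h := h ∘ Prod.swap) fun s ↦ by
    obtain ⟨U, hU, hcarried⟩ := hstrip s
    refine ⟨univ, Filter.univ_mem, U, hU, ?_⟩
    exact (hcarried.comp continuous_swap).mono fun p hp ↦ ⟨hp.2, hp.1⟩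
  obtain rfl := Filter.mem_top.1 hU
  exact (hcarried.comp continuous_swap).mono fun p _ ↦ ⟨mem_univ _, mem_univ _⟩

end AmbientIsotopy

section InwardPush

theorem extendById_injective {X S : Type*} [Nonempty X] {J : X → S} (hJ : Function.Injective J)
    {f : X → X} (hf : Function.Injective f) : Function.Injective (extendById J f) :=
  (leftInverse_extendById hJ (Function.leftInverse_invFun hf)).injective

/-- The model with corners `I`, restricted to an open partial homeomorphism between the points that
it sends to the interior of its range and that interior. -/
noncomputable def modelInteriorChart {E H : Type*} [NormedAddCommGroup E] [NormedSpace ℝ E]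
    [TopologicalSpace H] (I : ModelWithCorners ℝ E H) : OpenPartialHomeomorph H E where
  toFun := I
  invFun := I.symm
  source := I ⁻¹' interior (range I)
  target := interior (range I)
  map_source' _ hx := hx
  map_target' x hx := by rwa [mem_preimage, I.right_inv (interior_subset hx)]
  left_inv' x _ := I.left_inv x
  right_inv' _ hx := I.right_inv (interior_subset hx)
  open_source := isOpen_interior.preimage I.continuous
  open_target := isOpen_interior
  continuousOn_toFun := I.continuous.continuousOn
  continuousOn_invFun := I.continuousOn_symm

variable {S : Type*} [TopologicalSpace S]

variable {d : ℕ} [NeZero d]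

theorem mem_modelLocus_of_apply_zero_pos (e : OpenPartialHomeomorph S (EuclideanHalfSpace d))
    {x : S} (hx : x ∈ e.source) (hpos : 0 < (e x).1 0) :
    x ∈ modelLocus (EuclideanSpace ℝ (Fin d)) S := by
  refine mem_modelLocus_iff.2 ⟨e.trans (modelInteriorChart (modelWithCornersEuclideanHalfSpace d)),
    hx, ?_⟩
  change (e x).1 ∈ interior (range (modelWithCornersEuclideanHalfSpace d))
  rwa [interior_range_modelWithCornersEuclideanHalfSpace]

/-- The self-map of the half-space that pushes the points at distance less than `r` from `c` away
from the boundary. -/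
noncomputable def halfSpacePush (c : EuclideanHalfSpace d) (r : ℝ) (y : EuclideanHalfSpace d) :
    EuclideanHalfSpace d :=
  ⟨push c.1 r (EuclideanSpace.single 0 (1 / 2)) y.1, by
    have := y.2
    simp only [push, PiLp.add_apply, PiLp.smul_apply, PiLp.single_apply, if_pos,
      smul_eq_mul]
    positivity⟩

theorem continuous_halfSpacePush (c : EuclideanHalfSpace d) (r : ℝ) :
    Continuous (halfSpacePush c r) :=
  ((continuous_push c.1 r).comp (continuous_const.prodMk continuous_subtype_val)).subtype_mk _

theorem injective_halfSpacePush (c : EuclideanHalfSpace d) (r : ℝ) :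
    Function.Injective (halfSpacePush c r) := fun y y' h ↦
  Subtype.ext <| injective_push c.1 r (v := EuclideanSpace.single 0 (1 / 2)) (by simp)
    (congrArg Subtype.val h)

theorem halfSpacePush_of_le {c y : EuclideanHalfSpace d} {r : ℝ} (hy : r ≤ dist y.1 c.1) :
    halfSpacePush c r y = y :=
  Subtype.ext (push_of_le_norm_sub _ (by rwa [← dist_eq_norm]))

theorem dist_halfSpacePush_le {c y : EuclideanHalfSpace d} {r : ℝ} (hy : dist y.1 c.1 ≤ r) :
    dist (halfSpacePush c r y).1 c.1 ≤ r := by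
  rw [dist_eq_norm] at hy ⊢
  exact norm_push_sub_le (by simp; norm_num) hy

theorem halfSpacePush_apply_zero_pos {c y : EuclideanHalfSpace d} {r : ℝ}
    (hy : dist y.1 c.1 < r) : 0 < (halfSpacePush c r y).1 0 := by
  have hy₀ : 0 ≤ y.1 0 := y.2
  rw [dist_eq_norm] at hy
  have : 0 < r - ‖y.1 - c.1‖ := sub_pos.2 hy
  simp only [halfSpacePush, push_of_norm_sub_le _ hy.le, PiLp.add_apply, PiLp.smul_apply,
    PiLp.single_apply, if_pos, smul_eq_mul]
  positivity

/-- A continuous injective self-map of `S` that fixes `K` and moves points only into the locus of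
points with a neighbourhood homeomorphic to `E`, for instance off the boundary of a manifold. -/
structure IsInwardPush (E : Type*) {S : Type*} [TopologicalSpace E] [TopologicalSpace S] (K : Set S)
    (Ψ : S → S) : Prop where
  continuous : Continuous Ψ
  injective : Function.Injective Ψ
  eqOn : EqOn Ψ id K
  eq_or_mem : ∀ x, Ψ x = x ∨ Ψ x ∈ modelLocus E S

namespace IsInwardPush

variable {E : Type*} [TopologicalSpace E] {K : Set S} {Ψ Ψ' : S → S}

protected theorem id : IsInwardPush E K id :=
  ⟨continuous_id, Function.injective_id, fun _ _ ↦ rfl, fun _ ↦ .inl rfl⟩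

theorem apply_mem (hΨ : IsInwardPush E K Ψ) {x : S} (hx : x ∈ modelLocus E S) :
    Ψ x ∈ modelLocus E S := by
  rcases hΨ.eq_or_mem x with h | h
  · rwa [h]
  · exact h

theorem comp (hΨ : IsInwardPush E K Ψ) (hΨ' : IsInwardPush E K Ψ') :
    IsInwardPush E K (Ψ ∘ Ψ') where
  continuous := hΨ.continuous.comp hΨ'.continuous
  injective := hΨ.injective.comp hΨ'.injective
  eqOn x hx := (congrArg Ψ (hΨ'.eqOn hx)).trans (hΨ.eqOn hx)
  eq_or_mem x := by
    rcases hΨ'.eq_or_mem x with h | h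
    · rw [Function.comp_apply, h]
      exact hΨ.eq_or_mem x
    · exact .inr (hΨ.apply_mem h)

theorem mapsTo_comp_union (hΨ : IsInwardPush E K Ψ) (hΨ' : IsInwardPush E K Ψ') {s t : Set S}
    (hs : MapsTo Ψ' s (modelLocus E S)) (ht : MapsTo Ψ t (modelLocus E S)) :
    MapsTo (Ψ ∘ Ψ') (s ∪ t) (modelLocus E S) := by
  rintro x (hx | hx)
  · exact hΨ.apply_mem (hs hx)
  · rcases hΨ'.eq_or_mem x with h | h
    · rw [Function.comp_apply, h]
      exact ht hx
    · exact hΨ.apply_mem h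

end IsInwardPush

theorem isInwardPush_extendById {E X : Type*} [TopologicalSpace E] [TopologicalSpace X] [T2Space S]
    [Nonempty X] {J : X → S} (hJ : IsOpenEmbedding J) {B C : Set X} (hC : IsCompact C) (hBC : B ⊆ C)
    {f : X → X} (hf : Continuous f) (hinj : Function.Injective f) (hid : ∀ x ∉ B, f x = x)
    {K : Set S} (hK : MapsTo J B Kᶜ) (hlocus : MapsTo (J ∘ f) B (modelLocus E S)) :
    IsInwardPush E K (extendById J f) where
  continuous := (continuous_extendById (P := Unit) hJ hC (hf.comp continuous_snd)
    fun _ x hx ↦ hid x fun h ↦ hx (hBC h)).comp (.prodMk_right ())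
  injective := extendById_injective hJ.injective hinj
  eqOn y hy := extendById_of_notMem_image hJ.injective hid (by
    rintro ⟨x, hx, rfl⟩
    exact hK hx hy)
  eq_or_mem y := by
    by_cases hy : y ∈ J '' B
    · obtain ⟨x, hx, rfl⟩ := hy
      rw [extendById_apply hJ.injective]
      exact .inr (hlocus hx)
    · exact .inl (extendById_of_notMem_image hJ.injective hid hy)

theorem isCompact_setOf_dist_val_le (c : EuclideanHalfSpace d) (r : ℝ) :
    IsCompact {y : EuclideanHalfSpace d | dist y.1 c.1 ≤ r} :=
  (modelWithCornersEuclideanHalfSpace d).isClosedEmbedding.isCompact_preimage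
    (isCompact_closedBall c.1 r)

theorem exists_dist_val_le_subset {c : EuclideanHalfSpace d} {U : Set (EuclideanHalfSpace d)}
    (hU : U ∈ 𝓝 c) : ∃ r > 0, {y : EuclideanHalfSpace d | dist y.1 c.1 ≤ r} ⊆ U := by
  rw [(modelWithCornersEuclideanHalfSpace d).isClosedEmbedding.nhds_eq_comap] at hU
  exact (Metric.nhds_basis_closedBall.comap _).mem_iff.1 hU

theorem mapsTo_halfSpacePush {c : EuclideanHalfSpace d} {r : ℝ} {T : Set (EuclideanHalfSpace d)}
    (hT : {y : EuclideanHalfSpace d | dist y.1 c.1 ≤ r} ⊆ T) :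
    MapsTo (halfSpacePush c r) T T := fun y hy ↦ by
  rcases le_total r (dist y.1 c.1) with h | h
  · rwa [halfSpacePush_of_le h]
  · exact hT (dist_halfSpacePush_le h)

theorem exists_isInwardPush_nhds [T2Space S] (e : OpenPartialHomeomorph S (EuclideanHalfSpace d))
    {K : Set S} (hK : IsClosed K) {x : S} (hx : x ∈ e.source) (hxK : x ∉ K) :
    ∃ Ψ, IsInwardPush (EuclideanSpace ℝ (Fin d)) K Ψ ∧
      ∀ᶠ y in 𝓝 x, Ψ y ∈ modelLocus (EuclideanSpace ℝ (Fin d)) S := by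
  have hnhds : e.target ∩ e.symm ⁻¹' Kᶜ ∈ 𝓝 (e x) :=
    (e.isOpen_inter_preimage_symm hK.isOpen_compl).mem_nhds
      ⟨e.map_source hx, by simpa [e.left_inv hx] using hxK⟩
  obtain ⟨r, hr, hball⟩ := exists_dist_val_le_subset hnhds
  have hmaps := mapsTo_halfSpacePush fun y hy ↦ (hball hy).1
  let J : e.target → S := fun y ↦ e.symm y
  let f : e.target → e.target := hmaps.restrict (halfSpacePush (e x) r) _ _
  let B : Set e.target := {y | dist y.1.1 (e x).1 < r}
  have hlocus : MapsTo (J ∘ f) B (modelLocus (EuclideanSpace ℝ (Fin d)) S) := fun y hy ↦ by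
    refine mem_modelLocus_of_apply_zero_pos e (e.map_target (f y).2) ?_
    change 0 < (e (e.symm (f y))).1 0
    rw [e.right_inv (f y).2]
    exact halfSpacePush_apply_zero_pos hy
  have hJ : IsOpenEmbedding J := e.symm.isOpenEmbedding_restrict
  have hC : IsCompact {y : e.target | dist y.1.1 (e x).1 ≤ r} :=
    IsInducing.subtypeVal.isCompact_preimage' (isCompact_setOf_dist_val_le (e x) r)
      fun y hy ↦ ⟨⟨y, (hball hy).1⟩, rfl⟩
  have : Nonempty e.target := ⟨⟨e x, e.map_source hx⟩⟩
  refine ⟨extendById J f, isInwardPush_extendById (B := B) hJ hC (fun y (hy : _ < r) ↦ hy.le)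
    ((continuous_halfSpacePush _ r).restrict hmaps)
    (hmaps.restrict_inj.2 (injective_halfSpacePush _ r).injOn)
    (fun y hy ↦ Subtype.ext (halfSpacePush_of_le (not_lt.1 hy)))
    (fun y (hy : _ < r) ↦ (hball hy.le).2) hlocus, ?_⟩
  have hdist : ∀ᶠ y in 𝓝 x, dist (e y).1 (e x).1 < r :=
    (continuous_subtype_val.continuousAt.comp (e.continuousAt hx)).eventually
      (Metric.ball_mem_nhds _ hr)
  filter_upwards [hdist, e.open_source.mem_nhds hx] with y hy hys
  have hy' := hlocus (x := ⟨e y, e.map_source hys⟩) hy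
  rwa [Function.comp_apply, ← extendById_apply hJ.injective,
    show J ⟨e y, e.map_source hys⟩ = y from e.left_inv hys] at hy'

theorem exists_isInwardPush_mapsTo [T2Space S] [ChartedSpace (EuclideanHalfSpace d) S] {K L : Set S}
    (hK : IsClosed K) (hKlocus : K ⊆ modelLocus (EuclideanSpace ℝ (Fin d)) S) (hL : IsCompact L) :
    ∃ Ψ, IsInwardPush (EuclideanSpace ℝ (Fin d)) K Ψ ∧
      MapsTo Ψ L (modelLocus (EuclideanSpace ℝ (Fin d)) S) := by
  refine hL.induction_on (p := fun L ↦ ∃ Ψ, IsInwardPush (EuclideanSpace ℝ (Fin d)) K Ψ ∧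
    MapsTo Ψ L (modelLocus (EuclideanSpace ℝ (Fin d)) S)) ?_ ?_ ?_ ?_
  · exact ⟨id, .id, mapsTo_empty _ _⟩
  · rintro s t hst ⟨Ψ, hΨ, ht⟩
    exact ⟨Ψ, hΨ, ht.mono_left hst⟩
  · rintro s t ⟨Ψ', hΨ', hs⟩ ⟨Ψ, hΨ, ht⟩
    exact ⟨Ψ ∘ Ψ', hΨ.comp hΨ', hΨ.mapsTo_comp_union hΨ' hs ht⟩
  · intro x _
    by_cases hx : x ∈ K
    · exact ⟨_, mem_nhdsWithin_of_mem_nhds (isOpen_modelLocus.mem_nhds (hKlocus hx)), id, .id,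
        mapsTo_id _⟩
    · obtain ⟨Ψ, hΨ, hnhds⟩ := exists_isInwardPush_nhds (chartAt (EuclideanHalfSpace d) x) hK
        (mem_chart_source _ x) hx
      exact ⟨_, mem_nhdsWithin_of_mem_nhds hnhds, Ψ, hΨ, fun _ ↦ id⟩

theorem modelLocus_nonempty [T2Space S] [Nonempty S] [ChartedSpace (EuclideanHalfSpace d) S] :
    (modelLocus (EuclideanSpace ℝ (Fin d)) S).Nonempty := by
  obtain ⟨x⟩ := ‹Nonempty S›
  obtain ⟨Ψ, -, hΨ⟩ := exists_isInwardPush_nhds (chartAt (EuclideanHalfSpace d) x) isClosed_empty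
    (mem_chart_source _ x) (notMem_empty x)
  exact ⟨Ψ x, hΨ.self_of_nhds⟩

end InwardPush

section Puncture

theorem isPreconnected_sdiff_singleton_of_mem_nhdsWithin {X : Type*} [TopologicalSpace X]
    [T1Space X] {s U : Set X} {p : X} (hs : IsPreconnected s) (hU : U ∈ 𝓝[s] p) (hUs : U ⊆ s)
    (hUp : IsPreconnected (U \ {p})) : IsPreconnected (s \ {p}) := by
  classical
  refine isPreconnected_of_forall_constant fun f hf x hx y hy ↦ ?_
  obtain ⟨b, hb⟩ : ∃ b, ∀ u ∈ U \ {p}, f u = b := by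
    rcases (U \ {p}).eq_empty_or_nonempty with h | ⟨u₀, hu₀⟩
    · exact ⟨true, by simp [h]⟩
    · exact ⟨f u₀, fun u hu ↦
        hUp.constant (hf.mono (sdiff_subset_sdiff_left hUs)) hu hu₀⟩
  have hcont : ContinuousOn (Function.update f p b) s := fun u hu ↦ by
    rcases eq_or_ne u p with rfl | hup
    · have : Function.update f u b =ᶠ[𝓝[s] u] fun _ ↦ b := by
        filter_upwards [hU] with w hw
        rcases eq_or_ne w u with rfl | hwu
        · exact Function.update_self ..
        · rw [Function.update_of_ne hwu, hb w ⟨hw, hwu⟩]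
      exact continuousWithinAt_const.congr_of_eventuallyEq_of_mem this hu
    · refine continuousWithinAt_update_of_ne hup |>.2 ?_
      exact (hf u ⟨hu, hup⟩).mono_of_mem_nhdsWithin
        (Filter.inter_mem self_mem_nhdsWithin
          (mem_nhdsWithin_of_mem_nhds (compl_singleton_mem_nhds hup)))
  have := hs.constant hcont hx.1 hy.1
  rwa [Function.update_of_ne hx.2, Function.update_of_ne hy.2] at this

variable {E : Type*} [NormedAddCommGroup E] [NormedSpace ℝ E]

theorem isPreconnected_sdiff_singleton_of_isOpen (hE : 1 < Module.rank ℝ E) {U : Set E}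
    (hU : IsPreconnected U) (hUo : IsOpen U) (c : E) : IsPreconnected (U \ {c}) := by
  by_cases hc : c ∈ U
  · obtain ⟨r, hr, hball⟩ := Metric.isOpen_iff.1 hUo c hc
    refine isPreconnected_sdiff_singleton_of_mem_nhdsWithin hU
      (mem_nhdsWithin_of_mem_nhds (Metric.ball_mem_nhds c hr)) hball ?_
    let j := OpenPartialHomeomorph.univBall c r
    have hj : j.source = univ := OpenPartialHomeomorph.univBall_source c r
    have himage : Metric.ball c r \ {c} = j '' {0}ᶜ := by
      rw [image_compl_eq_range_sdiff_image (j.isOpenEmbedding hj).injective, image_singleton,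
        ← image_univ, ← hj, j.image_source_eq_target,
        OpenPartialHomeomorph.univBall_target c hr, OpenPartialHomeomorph.univBall_apply_zero]
    rw [himage]
    exact (isConnected_compl_singleton_of_one_lt_rank hE 0).isPreconnected.image j
      (j.isOpenEmbedding hj).continuous.continuousOn
  · rwa [sdiff_singleton_eq_self hc]

theorem isPreconnected_sdiff_singleton_of_convex (hE : 1 < Module.rank ℝ E) {C : Set E}
    (hC : Convex ℝ C) (hCi : (interior C).Nonempty) (c : E) : IsPreconnected (C \ {c}) := by
  refine (isPreconnected_sdiff_singleton_of_isOpen hE hC.interior.isPreconnected isOpen_interior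
    c).subset_closure (sdiff_subset_sdiff_left interior_subset) ?_
  have : Nontrivial E := (rank_pos_iff_nontrivial (R := ℝ)).1 (zero_lt_one.trans hE)
  calc C \ {c} ⊆ closure (interior C) := by
        rw [hC.closure_interior_eq_closure_of_nonempty_interior hCi]
        exact sdiff_subset.trans subset_closure
    _ ⊆ closure (interior C \ {c}) := closure_minimal
        ((dense_compl_singleton c).open_subset_closure_inter isOpen_interior) isClosed_closure

theorem exists_nhds_isPreconnected_sdiff_singleton (hE : 1 < Module.rank ℝ E) {H S : Type*}
    [TopologicalSpace H] (I : ModelWithCorners ℝ E H) [TopologicalSpace S] [ChartedSpace H S]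
    {p : S} {W : Set S} (hW : W ∈ 𝓝 p) :
    ∃ U ∈ 𝓝 p, U ⊆ W ∧ IsPreconnected (U \ {p}) := by
  let φ := extChartAt I p
  have hnhds : φ.target ∩ φ.symm ⁻¹' W ∈ 𝓝[range I] φ p := by
    rw [← map_extChartAt_nhds, Filter.mem_map]
    filter_upwards [extChartAt_source_mem_nhds (I := I) p, hW] with x hx hxW
    exact ⟨φ.map_source hx, by rwa [mem_preimage, φ.left_inv hx]⟩
  obtain ⟨r, hr, hball⟩ := Metric.mem_nhdsWithin_iff.1 hnhds
  have hC : Convex ℝ (Metric.ball (φ p) r ∩ range I) := (convex_ball _ _).inter I.convex_range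
  have hCi : (interior (Metric.ball (φ p) r ∩ range I)).Nonempty := by
    rw [interior_inter, Metric.isOpen_ball.interior_eq]
    exact mem_closure_iff.1 (I.range_subset_closure_interior ⟨_, rfl⟩) _ Metric.isOpen_ball
      (Metric.mem_ball_self hr)
  have hmem : φ p ∈ Metric.ball (φ p) r ∩ range I := ⟨Metric.mem_ball_self hr, _, rfl⟩
  refine ⟨φ.symm '' (Metric.ball (φ p) r ∩ range I), ?_, ?_, ?_⟩
  · have hnhds' : Metric.ball (φ p) r ∩ range I ∈ 𝓝[range I] φ p :=
      Filter.inter_mem (mem_nhdsWithin_of_mem_nhds (Metric.ball_mem_nhds _ hr)) self_mem_nhdsWithin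
    rw [← map_extChartAt_nhds, Filter.mem_map] at hnhds'
    filter_upwards [extChartAt_source_mem_nhds (I := I) p, hnhds'] with x hx hxC
    exact ⟨φ x, hxC, φ.left_inv hx⟩
  · exact image_subset_iff.2 fun y hy ↦ (hball hy).2
  · have himage : φ.symm '' (Metric.ball (φ p) r ∩ range I) \ {p} =
        φ.symm '' ((Metric.ball (φ p) r ∩ range I) \ {φ p}) := by
      rw [(φ.symm.injOn.mono fun y hy ↦ (hball hy).1).image_sdiff_subset
        (singleton_subset_iff.2 hmem), image_singleton, extChartAt_to_inv]
    rw [himage]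
    exact (isPreconnected_sdiff_singleton_of_convex hE hC hCi (φ p)).image _
      ((continuousOn_extChartAt_symm p).mono fun y hy ↦ (hball hy.1).1)

theorem isPreconnected_compl_of_finite (hE : 1 < Module.rank ℝ E) {H S : Type*}
    [TopologicalSpace H] (I : ModelWithCorners ℝ E H) [TopologicalSpace S] [ChartedSpace H S]
    [T1Space S] [PreconnectedSpace S] {A : Set S} (hA : A.Finite) : IsPreconnected Aᶜ := by
  induction A, hA using Set.Finite.induction_on with
  | empty => simpa using isPreconnected_univ
  | @insert a s ha hs ih =>
    have hW : sᶜ ∈ 𝓝 a := hs.isClosed.isOpen_compl.mem_nhds ha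
    obtain ⟨U, hU, hUs, hUa⟩ := exists_nhds_isPreconnected_sdiff_singleton hE I hW
    rw [← union_singleton, compl_union, ← sdiff_eq]
    exact isPreconnected_sdiff_singleton_of_mem_nhdsWithin ih (mem_nhdsWithin_of_mem_nhds hU)
      hUs hUa

end Puncture

section Configurations

/-- The configuration space of distinct points of `S` labelled by `ι`, topologized as a subspace
of the product. -/
abbrev OrderedConf (ι S : Type*) : Type _ := {x : ι → S // Function.Injective x}

variable {ι S : Type*}

theorem injective_update_of_forall_ne [DecidableEq ι] {x : ι → S} (hx : Function.Injective x)
    {i : ι} {y : S} (hy : ∀ k, k ≠ i → y ≠ x k) : Function.Injective (Function.update x i y) := by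
  intro k l h
  rcases eq_or_ne k i with rfl | hk <;> rcases eq_or_ne l k with rfl | hl
  · rfl
  · exact absurd (by simpa [hl] using h) (hy l hl)
  · rfl
  · rcases eq_or_ne l i with rfl | hl'
    · exact absurd (by simpa [hk] using h.symm) (hy k hk)
    · exact absurd (hx (by simpa [hk, hl'] using h.symm)) hl

theorem injective_piecewise_of_forall_ne {x w : ι → S} (hx : Function.Injective x)
    (hw : Function.Injective w) (hwx : ∀ i k, w i ≠ x k) (s : Finset ι) [DecidablePred (· ∈ s)] :
    Function.Injective (s.piecewise w x) := by
  intro k l h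
  by_cases hk : k ∈ s <;> by_cases hl : l ∈ s <;> simp only [Finset.piecewise, hk, hl, if_true,
    if_false] at h
  · exact hw h
  · exact absurd h (hwx k l)
  · exact absurd h.symm (hwx l k)
  · exact hx h

theorem OrderedConf.exists_forall_notMem [Finite ι] [Infinite S] {A : Set S} (hA : A.Finite) :
    ∃ w : OrderedConf ι S, ∀ i, w.1 i ∉ A := by
  have := hA.infinite_compl.to_subtype
  let e : ι ↪ (Aᶜ : Set S) :=
    ((Finite.equivFin ι).toEmbedding.trans Fin.valEmbedding).trans (Infinite.natEmbedding _)
  exact ⟨⟨fun i ↦ (e i).1, Subtype.val_injective.comp e.injective⟩, fun i ↦ (e i).2⟩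

variable [TopologicalSpace S]

theorem OrderedConf.joined_update [DecidableEq ι] [Finite ι]
    (hS : ∀ A : Set S, A.Finite → IsPathConnected Aᶜ) (x : OrderedConf ι S) {i : ι} {y : S}
    (hy : Function.Injective (Function.update x.1 i y)) :
    Joined x ⟨Function.update x.1 i y, hy⟩ := by
  have hx_mem : x.1 i ∈ (x.1 '' {i}ᶜ)ᶜ := fun ⟨_, hk, h⟩ ↦ hk (x.2 h)
  have hy_mem : y ∈ (x.1 '' {i}ᶜ)ᶜ := fun ⟨k, hk, h⟩ ↦
    hk (hy (by simpa [Function.update_of_ne hk] using h))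
  obtain ⟨γ, hγ⟩ := (hS _ ((toFinite _).image _)).joinedIn _ hx_mem _ hy_mem
  have hinj (t : unitInterval) : Function.Injective (Function.update x.1 i (γ t)) :=
    injective_update_of_forall_ne x.2 fun k hk h ↦ hγ t ⟨k, hk, h.symm⟩
  exact ⟨{  toFun := fun t ↦ ⟨Function.update x.1 i (γ t), hinj t⟩
            continuous_toFun := (continuous_const.update i γ.continuous).subtype_mk _
            source' := Subtype.ext (by simp)
            target' := Subtype.ext (by simp) }⟩

theorem OrderedConf.joined_of_forall_ne [Finite ι]
    (hS : ∀ A : Set S, A.Finite → IsPathConnected Aᶜ) {x w : OrderedConf ι S}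
    (hwx : ∀ i k, w.1 i ≠ x.1 k) : Joined x w := by
  classical
  have := Fintype.ofFinite ι
  have hinj := injective_piecewise_of_forall_ne x.2 w.2 hwx
  have hjoined (s : Finset ι) : Joined x ⟨s.piecewise w.1 x.1, hinj s⟩ := by
    induction s using Finset.induction_on with
    | empty => simpa only [Finset.piecewise_empty] using Joined.refl x
    | insert a s _ ih =>
      have hinsert := hinj (insert a s)
      simp only [Finset.piecewise_insert] at hinsert ⊢
      exact ih.trans (joined_update hS ⟨s.piecewise w.1 x.1, hinj s⟩ hinsert)
  simpa only [Finset.piecewise_univ] using hjoined Finset.univ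

theorem OrderedConf.pathConnectedSpace [Finite ι] [Infinite S]
    (hS : ∀ A : Set S, A.Finite → IsPathConnected Aᶜ) :
    PathConnectedSpace (OrderedConf ι S) where
  nonempty := (exists_forall_notMem finite_empty).nonempty
  joined x y := by
    obtain ⟨w, hw⟩ := exists_forall_notMem (ι := ι) ((finite_range x.1).union (finite_range y.1))
    exact (joined_of_forall_ne hS fun i k h ↦ hw i (.inl ⟨k, h.symm⟩)).trans
      (joined_of_forall_ne hS fun i k h ↦ hw i (.inr ⟨k, h.symm⟩)).symm

theorem isPathConnected_compl_of_finite {E H : Type*} [NormedAddCommGroup E] [NormedSpace ℝ E]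
    (hE : 1 < Module.rank ℝ E) [TopologicalSpace H] (I : ModelWithCorners ℝ E H) [ChartedSpace H S]
    [T1Space S] [PreconnectedSpace S] [LocallyPathConnectedSpace S] [Infinite S] {A : Set S}
    (hA : A.Finite) : IsPathConnected Aᶜ :=
  hA.isClosed.isOpen_compl.isConnected_iff_isPathConnected.1
    ⟨hA.infinite_compl.nonempty, isPreconnected_compl_of_finite hE I hA⟩

end Configurations

section Centrality

theorem commute_evalAt_of_homotopy_id {X : Type*} [TopologicalSpace X]
    (F : (ContinuousMap.id X).Homotopy (ContinuousMap.id X)) (x : X) (d : FundamentalGroup X x) :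
    Commute (FundamentalGroup.fromPath (.mk (F.evalAt x))) d := by
  induction d using Path.Homotopic.Quotient.ind with | mk p
  have h := Path.Homotopic.map_trans_evalAt F p
  simp only [ContinuousMap.coe_id, Path.map_id] at h
  exact Path.Homotopic.Quotient.eq.2 h

variable {ι S : Type*} [TopologicalSpace S] [T2Space S] [Finite ι] {d : ℕ} [NeZero d]
  [ChartedSpace (EuclideanHalfSpace d) S]

theorem exists_continuousMap_mem_modelLocus {P : Type*} [TopologicalSpace P] [CompactSpace P]
    {K : Set P} (hK : IsCompact K) (F : C(P, OrderedConf ι S))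
    (hF : ∀ p ∈ K, ∀ i, (F p).1 i ∈ modelLocus (EuclideanSpace ℝ (Fin d)) S) :
    ∃ G : C(P, OrderedConf ι S), EqOn G F K ∧
      ∀ p i, (G p).1 i ∈ modelLocus (EuclideanSpace ℝ (Fin d)) S := by
  have hcont (i : ι) : Continuous fun p ↦ (F p).1 i :=
    (continuous_apply i).comp (continuous_subtype_val.comp F.continuous)
  have hcompact {L : Set P} (hL : IsCompact L) : IsCompact (⋃ i, (fun p ↦ (F p).1 i) '' L) :=
    isCompact_iUnion fun i ↦ hL.image (hcont i)
  obtain ⟨Ψ, hΨ, hΨL⟩ := exists_isInwardPush_mapsTo (hcompact hK).isClosed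
    (iUnion_subset fun i ↦ image_subset_iff.2 fun p hp ↦ hF p hp i) (hcompact isCompact_univ)
  refine ⟨⟨fun p ↦ ⟨Ψ ∘ (F p).1, hΨ.injective.comp (F p).2⟩, ?_⟩, fun p hp ↦ ?_, fun p i ↦ ?_⟩
  · exact (continuous_pi fun i ↦ hΨ.continuous.comp (hcont i)).subtype_mk _
  · exact Subtype.ext (funext fun i ↦ hΨ.eqOn (mem_iUnion.2 ⟨i, p, hp, rfl⟩))
  · exact hΨL (mem_iUnion.2 ⟨i, p, mem_univ p, rfl⟩)

theorem exists_isContinuousFamily_of_mem_modelLocus {E : Type*} [NormedAddCommGroup E]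
    [NormedSpace ℝ E] [FiniteDimensional ℝ E] (G : C(unitInterval × unitInterval, OrderedConf ι S))
    (hG : ∀ p i, (G p).1 i ∈ modelLocus E S) {c : OrderedConf ι S} (hc : ∀ t, G (1, t) = c) :
    ∃ Φ : unitInterval × unitInterval → S ≃ₜ S, IsContinuousFamily Φ ∧ (∀ t, Φ (1, t) = 1) ∧
      ∀ p i, Φ p (c.1 i) = (G p).1 i := by
  obtain ⟨Φ, b, hΦ, hb⟩ :=
    isCarriedOn_univ (continuous_subtype_val.comp G.continuous) (fun p ↦ (G p).2) hG
  refine ⟨fun p ↦ Φ p * (Φ (1, p.2))⁻¹,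
    hΦ.mul (hΦ.comp (continuous_const.prodMk continuous_snd)).inv,
    fun t ↦ mul_inv_cancel _, fun p i ↦ ?_⟩
  have hci : Φ (1, p.2) (b i) = c.1 i := by
    rw [← hc p.2]
    exact hb (1, p.2) (mem_univ _) i
  have hinv : (Φ (1, p.2))⁻¹ (c.1 i) = b i := (Homeomorph.symm_apply_eq _).2 hci.symm
  change Φ p ((Φ (1, p.2))⁻¹ (c.1 i)) = _
  rw [hinv]
  exact hb p (mem_univ p) i

/-- A path running along three sides of the unit square, from `(1, 0)` through `(0, 0)` and
`(0, 1)` to `(1, 1)`. -/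
noncomputable def squareSidesPath : Path ((1, 0) : unitInterval × unitInterval) (1, 1) :=
  let e : Path (0 : unitInterval) 1 := ⟨.id _, rfl, rfl⟩
  (e.symm.prod (.refl 0)).trans (((Path.refl 0).prod e).trans (e.prod (.refl 1)))

theorem apply_squareSidesPath {X : Type*} [TopologicalSpace X] {c : X} {γ : Path c c}
    {G : unitInterval × unitInterval → X} (h₀ : ∀ t, G (0, t) = γ t) (hl : ∀ s, G (s, 0) = c)
    (hr : ∀ s, G (s, 1) = c) (u : unitInterval) :
    G (squareSidesPath u) = (Path.refl c).trans (γ.trans (.refl c)) u := by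
  simp only [squareSidesPath, Path.trans_apply]
  split_ifs
  · exact hl _
  · exact h₀ _
  · exact hr _

/-- The points are carried along over the whole square of the nullhomotopy; running along three
sides of that square makes the isotopy start and end at the identity. -/
theorem exists_isContinuousFamily_loop {c : OrderedConf ι S} {γ : Path c c}
    (hγ : ∀ t i, (γ t).1 i ∈ modelLocus (EuclideanSpace ℝ (Fin d)) S)
    (hnull : γ.Homotopic (.refl c)) :
    ∃ Θ : unitInterval → S ≃ₜ S, IsContinuousFamily Θ ∧ Θ 0 = 1 ∧ Θ 1 = 1 ∧
      ∀ u i, Θ u (c.1 i) = (((Path.refl c).trans (γ.trans (.refl c))) u).1 i := by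
  obtain ⟨F⟩ := hnull
  let K : Set (unitInterval × unitInterval) := ({0, 1} ×ˢ univ) ∪ (univ ×ˢ {0, 1})
  have hK : IsClosed K := ((toFinite {0, 1}).isClosed.prod isClosed_univ).union
    (isClosed_univ.prod (toFinite {0, 1}).isClosed)
  have hcmem (i) : c.1 i ∈ modelLocus (EuclideanSpace ℝ (Fin d)) S := by
    simpa using hγ 0 i
  have hF : ∀ p ∈ K, ∀ i, (F p).1 i ∈ modelLocus (EuclideanSpace ℝ (Fin d)) S := by
    rintro ⟨s, t⟩ (⟨rfl | rfl, -⟩ | ⟨-, rfl | rfl⟩) i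
    · simpa using hγ t i
    all_goals simpa using hcmem i
  obtain ⟨G, hGF, hG⟩ := exists_continuousMap_mem_modelLocus hK.isCompact F.toContinuousMap hF
  obtain ⟨Φ, hΦ, hΦ₁, hΦc⟩ := exists_isContinuousFamily_of_mem_modelLocus G hG fun t ↦
    (hGF (by simp [K])).trans (F.apply_one t)
  refine ⟨Φ ∘ squareSidesPath, hΦ.comp squareSidesPath.continuous, ?_, ?_, fun u i ↦ ?_⟩
  · simp [hΦ₁]
  · simp [hΦ₁]
  · rw [Function.comp_apply, hΦc, apply_squareSidesPath (G := G) (γ := γ)]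
    · exact fun t ↦ (hGF (by simp [K])).trans (F.apply_zero t)
    · exact fun s ↦ (hGF (by simp [K])).trans (F.source s)
    · exact fun s ↦ (hGF (by simp [K])).trans (F.target s)

/-- The fibre through `z` of the Fadell–Neuwirth map forgetting the point labelled `i₀`. -/
abbrev FadellNeuwirthFiber (z : OrderedConf ι S) (i₀ : ι) : Type _ :=
  {x : S // ∀ i, i ≠ i₀ → x ≠ z.1 i}

/-- The inclusion of the fibre of the Fadell–Neuwirth map in the configuration space. -/
def fiberInclusion [DecidableEq ι] (z : OrderedConf ι S) (i₀ : ι) :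
    C(FadellNeuwirthFiber z i₀, OrderedConf ι S) where
  toFun x := ⟨Function.update z.1 i₀ x.1, injective_update_of_forall_ne z.2 x.2⟩
  continuous_toFun := ((continuous_const (y := z.1)).update i₀ continuous_subtype_val).subtype_mk _

variable [DecidableEq ι] {z : OrderedConf ι S} {i₀ : ι}
  (hz : ∀ i, i ≠ i₀ → z.1 i ∈ modelLocus (EuclideanSpace ℝ (Fin d)) S)

include hz

theorem exists_homotopy_id_fadellNeuwirthFiber {x : FadellNeuwirthFiber z i₀} {γ : Path x x}
    (hγ : ∀ t, (γ t).1 ∈ modelLocus (EuclideanSpace ℝ (Fin d)) S)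
    (hnull : (γ.map (fiberInclusion z i₀).continuous).Homotopic (.refl _)) :
    ∃ F : (ContinuousMap.id (FadellNeuwirthFiber z i₀)).Homotopy (.id _),
      F.evalAt x = (Path.refl x).trans (γ.trans (.refl x)) := by
  have hloc (t : unitInterval) (i : ι) :
      (γ.map (fiberInclusion z i₀).continuous t).1 i ∈
        modelLocus (EuclideanSpace ℝ (Fin d)) S := by
    change Function.update z.1 i₀ (γ t).1 i ∈ _
    rcases eq_or_ne i i₀ with rfl | hi
    · simpa using hγ t
    · simpa [hi] using hz i hi
  obtain ⟨Θ, hΘ, hΘ₀, hΘ₁, hΘc⟩ := exists_isContinuousFamily_loop hloc hnull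
  have htrack (u : unitInterval) (i : ι) : Θ u (Function.update z.1 i₀ x.1 i) =
      Function.update z.1 i₀ ((Path.refl x).trans (γ.trans (.refl x)) u).1 i := by
    have hmap : (Path.refl (fiberInclusion z i₀ x)).trans
        ((γ.map (fiberInclusion z i₀).continuous).trans (.refl _)) =
        ((Path.refl x).trans (γ.trans (.refl x))).map (fiberInclusion z i₀).continuous := by
      simp only [Path.map_trans]
      rfl
    have := hΘc u i
    rw [hmap] at this
    exact this
  have hfix (u : unitInterval) (i : ι) (hi : i ≠ i₀) : Θ u (z.1 i) = z.1 i := by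
    simpa [hi] using htrack u i
  refine ⟨{ toFun := fun p ↦ ⟨Θ p.1 p.2.1, fun i hi h ↦
              p.2.2 i hi ((Θ p.1).injective (h.trans (hfix p.1 i hi).symm))⟩
            continuous_toFun :=
              (hΘ.apply continuous_fst (continuous_subtype_val.comp continuous_snd)).subtype_mk _
            map_zero_left := fun y ↦ Subtype.ext (by simp [hΘ₀])
            map_one_left := fun y ↦ Subtype.ext (by simp [hΘ₁]) }, ?_⟩
  ext u
  have := htrack u i₀
  simp only [Function.update_self] at this
  exact this

theorem commute_of_map_fiberInclusion_eq_one {Y : Type*} [TopologicalSpace Y]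
    {q : C(Y, FadellNeuwirthFiber z i₀)}
    (hq : ∀ y, (q y).1 ∈ modelLocus (EuclideanSpace ℝ (Fin d)) S) {y : Y}
    {g : FundamentalGroup Y y}
    (hg : FundamentalGroup.map (fiberInclusion z i₀) (q y) (FundamentalGroup.map q y g) = 1)
    (h : FundamentalGroup (FadellNeuwirthFiber z i₀) (q y)) :
    Commute (FundamentalGroup.map q y g) h := by
  induction g using Path.Homotopic.Quotient.ind with | mk γ
  obtain ⟨F, hF⟩ := exists_homotopy_id_fadellNeuwirthFiber hz (γ := γ.map q.continuous)
    (fun t ↦ hq (γ t)) (Path.Homotopic.Quotient.eq.1 hg)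
  have hcomm := commute_evalAt_of_homotopy_id F (q y) h
  rw [hF] at hcomm
  change Commute (1 * FundamentalGroup.map q y (.mk γ) * 1) h at hcomm
  rwa [mul_one, one_mul] at hcomm

end Centrality

section PlanarConfiguration

theorem continuousAt_extend_of_notMem_range {X S A : Type*} [TopologicalSpace X]
    [TopologicalSpace S] [T2Space S] [TopologicalSpace A] {j : X → S} (hj : Continuous j)
    (hinj : Function.Injective j) {f : X → A} {a : A}
    (hf : Filter.Tendsto f (Filter.cocompact X) (𝓝 a)) {x : S} (hx : x ∉ range j) :
    ContinuousAt (Function.extend j f fun _ ↦ a) x := by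
  rw [ContinuousAt, Function.extend_apply' _ _ _ hx]
  refine Filter.tendsto_def.2 fun U hU ↦ ?_
  obtain ⟨K, hK, hKU⟩ := Filter.mem_cocompact.1 (hf hU)
  filter_upwards [(hK.image hj).isClosed.isOpen_compl.mem_nhds
    fun h ↦ hx (image_subset_range j K h)] with u hu
  by_cases hur : u ∈ range j
  · obtain ⟨v, rfl⟩ := hur
    rw [mem_preimage, hinj.extend_apply]
    exact hKU fun hv ↦ hu ⟨v, hv, rfl⟩
  · rw [mem_preimage, Function.extend_apply' _ _ _ hur]
    exact mem_of_mem_nhds hU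

/-- The inverse of the coordinate given by `j`, extended by zero outside the range of `j`. It is
continuous away from the pole `j 0`. -/
noncomputable def invertedCoordinate {S : Type*} (j : ℂ → S) : S → ℂ :=
  Function.extend j Inv.inv fun _ ↦ 0

theorem invertedCoordinate_apply {S : Type*} {j : ℂ → S} (hj : Function.Injective j) (v : ℂ) :
    invertedCoordinate j (j v) = v⁻¹ :=
  hj.extend_apply ..

theorem invertedCoordinate_eq_iff {S : Type*} {j : ℂ → S} (hj : Function.Injective j) {x : S}
    {w : ℂ} (hw : w ≠ 0) : invertedCoordinate j x = w ↔ x = j w⁻¹ := by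
  refine ⟨fun h ↦ ?_, ?_⟩
  · by_cases hx : x ∈ range j
    · obtain ⟨v, rfl⟩ := hx
      rw [← h, invertedCoordinate_apply hj, inv_inv]
    · exact absurd (h.symm.trans (Function.extend_apply' _ _ _ hx)) hw
  · rintro rfl
    rw [invertedCoordinate_apply hj, inv_inv]

variable {S : Type*} [TopologicalSpace S] [T2Space S] {j : ℂ → S}

theorem continuousAt_invertedCoordinate (hj : IsOpenEmbedding j) {x : S} (hx : x ≠ j 0) :
    ContinuousAt (invertedCoordinate j) x := by
  by_cases hxr : x ∈ range j
  · obtain ⟨v, rfl⟩ := hxr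
    have hcomp : invertedCoordinate j ∘ j = Inv.inv :=
      funext (invertedCoordinate_apply hj.injective)
    rw [← hj.continuousAt_iff, hcomp]
    exact continuousAt_inv₀ fun hv ↦ hx (congrArg j hv)
  · refine continuousAt_extend_of_notMem_range hj.continuous hj.injective ?_ hxr
    rw [← Metric.cobounded_eq_cocompact]
    exact Filter.tendsto_inv₀_cobounded

/-- Put the fixed points at the images of `1`, `-1`, `0` and of further inverses of integers, so
that `1/w` avoids them for nonintegral `w`. -/
theorem exists_comp_eq_integerComplementInclusion (hj : IsOpenEmbedding j) {n : ℕ} (hn : 4 ≤ n) :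
    ∃ (z : OrderedConf (Fin n) S) (i₀ : Fin n)
      (q : C(Complex.integerComplement, FadellNeuwirthFiber z i₀))
      (f : C(FadellNeuwirthFiber z i₀, cosRegularValues)),
      (∀ i, z.1 i ∈ range j) ∧ (∀ w, (q w).1 ∈ range j) ∧
        f.comp q = integerComplementInclusion := by
  let p (i : Fin n) : ℂ := ((i : ℕ) : ℂ) - 2
  have hp : Function.Injective p := fun i k h ↦ Fin.ext (by simpa [p] using h)
  have hp_one : p ⟨1, by lia⟩ = -1 := by norm_num [p]
  have hp_two : p ⟨2, by lia⟩ = 0 := by norm_num [p]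
  have hp_three : p ⟨3, by lia⟩ = 1 := by norm_num [p]
  let z : OrderedConf (Fin n) S :=
    ⟨fun i ↦ j (p i)⁻¹, hj.injective.comp (inv_injective.comp hp)⟩
  let i₀ : Fin n := ⟨0, by lia⟩
  let q : C(Complex.integerComplement, FadellNeuwirthFiber z i₀) :=
    { toFun := fun w ↦ ⟨j w.1⁻¹, fun i _ h ↦
        w.2 ⟨(i : ℤ) - 2, by simpa [p] using (inv_injective (hj.injective h)).symm⟩⟩
      continuous_toFun := (hj.continuous.comp (continuous_subtype_val.inv₀ fun w ↦
        Complex.integerComplement.ne_zero w.2)).subtype_mk _ }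
  have hne (x : FadellNeuwirthFiber z i₀) (k : Fin n) (hk : 0 < (k : ℕ)) : x.1 ≠ j (p k)⁻¹ :=
    x.2 k (Fin.ne_of_val_ne hk.ne')
  let f : C(FadellNeuwirthFiber z i₀, cosRegularValues) :=
    { toFun := fun x ↦ ⟨invertedCoordinate j x.1, by
        have hne_one := hp_three ▸ hne x ⟨3, by lia⟩ (Nat.succ_pos 2)
        have hne_neg_one := hp_one ▸ hne x ⟨1, by lia⟩ Nat.one_pos
        simp only [cosRegularValues, mem_compl_iff, mem_insert_iff, mem_singleton_iff, not_or,
          invertedCoordinate_eq_iff hj.injective one_ne_zero,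
          invertedCoordinate_eq_iff hj.injective (neg_ne_zero.2 one_ne_zero)]
        exact ⟨hne_one, hne_neg_one⟩⟩
      continuous_toFun := continuous_iff_continuousAt.2 fun x ↦ by
        have hne_zero : x.1 ≠ j 0 := by
          simpa only [hp_two, inv_zero] using hne x ⟨2, by lia⟩ Nat.two_pos
        refine IsInducing.subtypeVal.continuousAt_iff.2 ?_
        exact (continuousAt_invertedCoordinate hj hne_zero).comp continuousAt_subtype_val }
  refine ⟨z, i₀, q, f, fun i ↦ mem_range_self _, fun w ↦ mem_range_self _, ?_⟩
  refine ContinuousMap.ext fun w ↦ Subtype.ext ?_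
  exact (invertedCoordinate_apply hj.injective _).trans (inv_inv w.1)

theorem exists_isOpenEmbedding_complex [Nonempty S] [ChartedSpace (EuclideanHalfSpace 2) S] :
    ∃ j : ℂ → S, IsOpenEmbedding j ∧ range j ⊆ modelLocus (EuclideanSpace ℝ (Fin 2)) S := by
  obtain ⟨-, j, hj, -⟩ := modelLocus_nonempty (d := 2) (S := S)
  let e : ℂ ≃ₜ EuclideanSpace ℝ (Fin 2) := Complex.orthonormalBasisOneI.repr.toHomeomorph
  exact ⟨j ∘ e, hj.comp e.isOpenEmbedding,
    (range_comp_subset_range e j).trans fun x hx ↦ ⟨j, hj, hx⟩⟩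

end PlanarConfiguration

theorem commute_fundamentalGroup_map_of_comp_eq {X Y Z : Type*} [TopologicalSpace X]
    [TopologicalSpace Y] [TopologicalSpace Z] {q : C(Y, X)} {f : C(X, Z)} {e : C(Y, Z)}
    (he : f.comp q = e) {y : Y} {g h : FundamentalGroup Y y}
    (hcomm : Commute (FundamentalGroup.map q y g) (FundamentalGroup.map q y h)) :
    Commute (FundamentalGroup.map e y g) (FundamentalGroup.map e y h) := by
  subst he
  have hmap (g : FundamentalGroup Y y) : FundamentalGroup.map (f.comp q) y g =
      FundamentalGroup.map f (q y) (FundamentalGroup.map q y g) :=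
    Path.Homotopic.Quotient.map_comp ..
  rw [hmap, hmap]
  exact hcomm.map _

section Surface

variable {S : Type*} [TopologicalSpace S] [T2Space S] [ConnectedSpace S]
  [ChartedSpace (EuclideanHalfSpace 2) S]

theorem pathConnectedSpace_orderedConf (ι : Type*) [Finite ι] :
    PathConnectedSpace (OrderedConf ι S) := by
  obtain ⟨j, hj, -⟩ := exists_isOpenEmbedding_complex (S := S)
  have : Infinite S := .of_injective j hj.injective
  have : LocallyPathConnectedSpace S :=
    ChartedSpace.locallyPathConnectedSpace (EuclideanHalfSpace 2) S
  have hrank : 1 < Module.rank ℝ (EuclideanSpace ℝ (Fin 2)) := by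
    rw [rank_eq_card_basis (EuclideanSpace.basisFun (Fin 2) ℝ).toBasis]
    simp
  exact OrderedConf.pathConnectedSpace fun A hA ↦
    isPathConnected_compl_of_finite hrank (modelWithCornersEuclideanHalfSpace 2) hA

theorem pure_braid_group_mod_center_infinite_general (n : ℕ) (hn : 4 ≤ n)
    (z : OrderedConf (Fin n) S) :
    Infinite (FundamentalGroup (OrderedConf (Fin n) S) z ⧸
      Subgroup.center (FundamentalGroup (OrderedConf (Fin n) S) z)) := by
  have := pathConnectedSpace_orderedConf (S := S) (Fin n)
  obtain ⟨j, hj, hjS⟩ := exists_isOpenEmbedding_complex (S := S)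
  obtain ⟨c, i₀, q, f, hc, hq, hfq⟩ := exists_comp_eq_integerComplementInclusion hj hn
  obtain ⟨y, θ, a, b, ha, hb⟩ := exists_loops_of_dihedral_monodromy
  let basepointChange := FundamentalGroup.fundamentalGroupMulEquivOfPathConnected
    (fiberInclusion c i₀ (q y)) z
  refine infinite_quotient_center_of_ker_le (a := a) (b := b)
    (basepointChange.toMonoidHom.comp
      ((FundamentalGroup.map (fiberInclusion c i₀) (q y)).comp (FundamentalGroup.map q y)))
    (θ.comp (FundamentalGroup.map integerComplementInclusion y)) (fun g hg h ↦ ?_) fun k hk ↦ ?_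
  · have hnull := basepointChange.map_eq_one_iff.1 hg
    exact (commute_fundamentalGroup_map_of_comp_eq hfq (commute_of_map_fiberInclusion_eq_one
      (fun i _ ↦ hjS (hc i)) (fun w ↦ hjS (hq w)) hnull _)).map θ
  · simpa only [MonoidHom.comp_apply, ha, hb] using dihedralGroup_zero_not_commute hk

end Surface

/-- For `n ≥ 4` and any compact surface `S` (a compact topological
2-manifold, possibly with boundary, modelled on the Euclidean half-plane), the quotient
`P_n(S)/Z(P_n(S))` of the pure braid group
`P_n(S) = π₁(C_n(S))` of the configuration space `C_n(S)` of `n` ordered distinct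
points in `S` by its center is infinite. -/
theorem pure_braid_group_mod_center_infinite {S : Type*} [TopologicalSpace S]
    [T2Space S] [CompactSpace S] [ConnectedSpace S]
    [ChartedSpace (EuclideanHalfSpace 2) S]
    (n : ℕ) (hn : 4 ≤ n)
    (z : {x : Fin n → S // Function.Injective x}) :
    Infinite (FundamentalGroup {x : Fin n → S // Function.Injective x} z ⧸
      Subgroup.center (FundamentalGroup {x : Fin n → S // Function.Injective x} z)) :=
  pure_braid_group_mod_center_infinite_general n hn z
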